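/- arXiv:2511.00734 — 4 statements merged into one kernel-verified Lean document; each statement's English description precedes it below -/
import Mathlib

section
/- Let X be a topological space, F a finite-dimensional real normed vector space, and E a topological ℝ-vector bundle over X with model fiber F. Suppose I is a vector bundle endomorphism of E covering the identity of X (i.e., a continuous map of the total space to itself that preserves each fiber and is ℝ-linear on each fiber) such that I_x ∘ I_x = −id on the fiber E_x for every x ∈ X. Then each fiber E_x becomes a complex vector space by setting (a + b·i) • v := a•v + b•I_x(v) for a, b ∈ ℝ, and with these complex structures (extending the given real scalar multiplication) E is a topological ℂ-vector bundle over X. -/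
/-!
Fix `x₀`, a real trivialization `e` near `x₀` and a `ℂ`-linear isomorphism `ψ : E x₀ ≃ ℂⁿ`.
Transporting `ψ` along `e` gives real-linear isomorphisms `E x → ℂⁿ` for `x` near `x₀`, which need
not be `ℂ`-linear unless `x = x₀`. Their `ℂ`-linear parts `v ↦ (f v - i f (i v)) / 2` depend
continuously on `x`, because multiplication by `i` is continuous on `E`, and agree with `ψ` at `x₀`.
Invertibility is an open condition, so they form a `ℂ`-linear trivialization around `x₀`.
-/

open Bundle

/-- Scalar multiplication with respect to an explicitly given complex module structure. -/
def modSMul {M : Type*} [AddCommGroup M] (m : Module ℂ M) (c : ℂ) (v : M) : M :=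
  letI := m
  c • v

/-- `E` is a topological `ℂ`-vector bundle over `X` with model fiber `F'`, where the complex
module structures on the fibers are given by `m` and the topology on the total space by `tE`. -/
def IsComplexVectorBundle {X : Type*} [TopologicalSpace X] (F' : Type*)
    [NormedAddCommGroup F'] [NormedSpace ℂ F'] (E : X → Type*)
    [∀ x, AddCommGroup (E x)] [∀ x, TopologicalSpace (E x)]
    (m : ∀ x, Module ℂ (E x)) (tE : TopologicalSpace (Bundle.TotalSpace F' E)) : Prop :=
  letI : ∀ x, Module ℂ (E x) := m
  letI := tE
  ∃ _ : FiberBundle F' E, VectorBundle ℂ F' E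

open Set Topology

section LinearAlgebra

lemma I_smul_I_smul {V : Type*} [AddCommGroup V] [Module ℂ V] (v : V) :
    Complex.I • Complex.I • v = -v := by
  rw [smul_smul, Complex.I_mul_I, neg_one_smul]

variable {V W : Type*} [AddCommGroup V] [Module ℝ V]

/-- The complex module structure on a real vector space in which `i` acts as a given endomorphism
`J` with `J ∘ J = -1`. It is reducible so that it can be used as a local instance. -/
@[reducible]
noncomputable def complexModuleOf (J : V →ₗ[ℝ] V) (hJ : ∀ v, J (J v) = -v) : Module ℂ V :=
  Module.compHom V
    (Complex.lift ⟨(J : Module.End ℝ V), LinearMap.ext fun v => by simp [hJ]⟩ :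
      ℂ →ₐ[ℝ] Module.End ℝ V).toRingHom

lemma modSMul_complexModuleOf (J : V →ₗ[ℝ] V) (hJ : ∀ v, J (J v) = -v) (c : ℂ) (v : V) :
    modSMul (complexModuleOf J hJ) c v = c.re • v + c.im • J v := by
  change (Complex.lift ⟨(J : Module.End ℝ V), _⟩ : ℂ →ₐ[ℝ] Module.End ℝ V) c v = _
  simp [Complex.liftAux_apply, Module.algebraMap_end_apply]

lemma isScalarTower_complexModuleOf (J : V →ₗ[ℝ] V) (hJ : ∀ v, J (J v) = -v) :
    letI := complexModuleOf J hJ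
    IsScalarTower ℝ ℂ V :=
  letI := complexModuleOf J hJ
  ⟨fun a c v => by
    change modSMul (complexModuleOf J hJ) (a • c) v = a • modSMul (complexModuleOf J hJ) c v
    rw [modSMul_complexModuleOf, modSMul_complexModuleOf]
    simp [mul_smul]⟩

variable [Module ℂ V] [IsScalarTower ℝ ℂ V]

lemma smul_eq_re_smul_add_im_smul_I_smul (c : ℂ) (v : V) :
    c • v = c.re • v + c.im • Complex.I • v := by
  conv_lhs => rw [← Complex.re_add_im c]
  rw [add_smul, mul_smul, ← Complex.coe_algebraMap, algebraMap_smul, algebraMap_smul]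

lemma nonempty_linearEquiv_fin_half_finrank [FiniteDimensional ℝ V] :
    Nonempty (V ≃ₗ[ℂ] (Fin (Module.finrank ℝ V / 2) → ℂ)) := by
  have : FiniteDimensional ℂ V := FiniteDimensional.right ℝ ℂ V
  have hrank : Module.finrank ℝ V = 2 * Module.finrank ℂ V := by
    rw [← Module.finrank_mul_finrank ℝ ℂ V, Complex.finrank_real_complex]
  exact ⟨LinearEquiv.ofFinrankEq _ _ (by simp [hrank])⟩

variable [AddCommGroup W] [Module ℝ W] [Module ℂ W] [IsScalarTower ℝ ℂ W]

/-- The `ℂ`-linear summand in the decomposition of a real-linear map between complex vector spaces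
into a `ℂ`-linear and a conjugate-linear map. -/
noncomputable def complexLinearPart (f : V →ₗ[ℝ] W) : V →ₗ[ℂ] W where
  toFun v := (1 / 2 : ℂ) • (f v - Complex.I • f (Complex.I • v))
  map_add' v w := by
    simp only [smul_add, map_add]
    module
  map_smul' c v := by
    have hf (u : V) : f (c • u) = c.re • f u + c.im • f (Complex.I • u) := by
      rw [smul_eq_re_smul_add_im_smul_I_smul, map_add, map_smul, map_smul]
    rw [RingHom.id_apply, smul_comm Complex.I c v, hf, hf, I_smul_I_smul, map_neg,
      smul_comm c (1 / 2 : ℂ), smul_eq_re_smul_add_im_smul_I_smul c (_ - _)]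
    simp only [smul_add, smul_sub, smul_neg, smul_comm Complex.I c.re, smul_comm Complex.I c.im,
      I_smul_I_smul]
    abel

lemma complexLinearPart_apply (f : V →ₗ[ℝ] W) (v : V) :
    complexLinearPart f v = (1 / 2 : ℂ) • (f v - Complex.I • f (Complex.I • v)) :=
  rfl

lemma complexLinearPart_restrictScalars (f : V →ₗ[ℂ] W) :
    complexLinearPart (f.restrictScalars ℝ) = f := by
  ext v
  rw [complexLinearPart_apply, LinearMap.restrictScalars_apply, LinearMap.restrictScalars_apply,
    map_smul, I_smul_I_smul]
  module

end LinearAlgebra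

section Trivialization

variable {𝕜 : Type*} [NontriviallyNormedField 𝕜] {B : Type*} [TopologicalSpace B]
  {F F' : Type*} [NormedAddCommGroup F] [NormedSpace 𝕜 F]
  [NormedAddCommGroup F'] [NormedSpace 𝕜 F']

lemma isOpen_setOf_isInvertible [CompleteSpace F] :
    IsOpen {a : F →L[𝕜] F' | a.IsInvertible} :=
  ContinuousLinearEquiv.isOpen

lemma continuousOn_inverse_of_isInvertible [CompleteSpace F] {A : B → F →L[𝕜] F'} {U : Set B}
    (hA : ContinuousOn A U) (hinv : ∀ x ∈ U, (A x).IsInvertible) :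
    ContinuousOn (fun x => (A x).inverse) U := fun x hx => by
  obtain ⟨a, ha⟩ := hinv x hx
  have hcont : ContinuousAt ContinuousLinearMap.inverse (A x) :=
    ha ▸ (contDiffAt_map_inverse (n := 0) a).continuousAt
  exact hcont.comp_continuousWithinAt (hA x hx)

/-- The homeomorphism `(x, f) ↦ (x, A x f)` over an open set on which the operators `A x` are
invertible and depend continuously on `x`. -/
noncomputable def fiberwiseLinearHomeomorph [CompleteSpace F] (A : B → F →L[𝕜] F') {U : Set B}
    (hU : IsOpen U) (hA : ContinuousOn A U) (hinv : ∀ x ∈ U, (A x).IsInvertible) :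
    OpenPartialHomeomorph (B × F) (B × F') where
  toFun p := (p.1, A p.1 p.2)
  invFun q := (q.1, (A q.1).inverse q.2)
  source := U ×ˢ univ
  target := U ×ˢ univ
  map_source' _ hp := ⟨hp.1, mem_univ _⟩
  map_target' _ hq := ⟨hq.1, mem_univ _⟩
  left_inv' := by
    rintro ⟨x, f⟩ ⟨hx, -⟩
    simp [(hinv x hx).inverse_apply_eq]
  right_inv' := by
    rintro ⟨x, f⟩ ⟨hx, -⟩
    simp [hinv x hx]
  open_source := hU.prod isOpen_univ
  open_target := hU.prod isOpen_univ
  continuousOn_toFun :=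
    continuousOn_fst.prodMk ((hA.comp continuousOn_fst fun _ hp => hp.1).clm_apply continuousOn_snd)
  continuousOn_invFun :=
    continuousOn_fst.prodMk <|
      ((continuousOn_inverse_of_isInvertible hA hinv).comp continuousOn_fst fun _ hq => hq.1)
        |>.clm_apply continuousOn_snd

/-- The local trivialization `z ↦ (x, A x f)` obtained from a local trivialization
`e : z ↦ (x, f)` and a continuous family of operators `A`. Its base set consists of the points of
`e.baseSet` at which `A` is invertible. -/
noncomputable def twistedTrivialization [CompleteSpace F] {Z : Type*} [TopologicalSpace Z]
    {proj : Z → B} (e : Trivialization F proj) (A : B → F →L[𝕜] F')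
    (hA : ContinuousOn A e.baseSet) : Trivialization F' proj where
  toOpenPartialHomeomorph := e.toOpenPartialHomeomorph.trans <|
    fiberwiseLinearHomeomorph A
      (hA.isOpen_inter_preimage e.open_baseSet isOpen_setOf_isInvertible)
      (hA.mono inter_subset_left) fun _ hx => hx.2
  baseSet := e.baseSet ∩ {x | (A x).IsInvertible}
  open_baseSet := hA.isOpen_inter_preimage e.open_baseSet isOpen_setOf_isInvertible
  source_eq := by
    ext z
    simp +contextual [fiberwiseLinearHomeomorph, e.mem_source]
  target_eq := by
    ext q
    simp +contextual [fiberwiseLinearHomeomorph, e.mem_target]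
  proj_toFun z hz := e.coe_fst hz.1

lemma twistedTrivialization_apply [CompleteSpace F] {Z : Type*} [TopologicalSpace Z]
    {proj : Z → B} (e : Trivialization F proj) (A : B → F →L[𝕜] F')
    (hA : ContinuousOn A e.baseSet) {z : Z} (hz : proj z ∈ e.baseSet) :
    twistedTrivialization e A hA z = (proj z, A (proj z) (e z).2) := by
  rw [← e.coe_fst' hz]
  rfl

variable {E : B → Type*} [∀ x, AddCommMonoid (E x)] [∀ x, Module 𝕜 (E x)]
  [TopologicalSpace (TotalSpace F E)]

lemma continuousOn_coordChangeL_of_finiteDimensional [CompleteSpace 𝕜] [FiniteDimensional 𝕜 F]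
    (e e' : Trivialization F (π F E)) [e.IsLinear 𝕜] [e'.IsLinear 𝕜] :
    ContinuousOn (fun x => (e.coordChangeL 𝕜 e' x : F →L[𝕜] F)) (e.baseSet ∩ e'.baseSet) := by
  refine continuousOn_clm_apply.2 fun f => ?_
  have hsymm : ContinuousOn (fun x => e.toOpenPartialHomeomorph.symm (x, f))
      (e.baseSet ∩ e'.baseSet) :=
    e.continuousOn_symm_prodMk_left.mono inter_subset_left
  have hcomp := e'.continuousOn.comp hsymm fun x hx =>
    e'.mem_source.2 ((e.proj_symm_apply' hx.1).symm ▸ hx.2)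
  exact hcomp.snd.congr fun x hx => e.coordChangeL_apply' e' hx f

lemma exists_vectorBundle_of_isLinear [CompleteSpace 𝕜] [FiniteDimensional 𝕜 F]
    [∀ x, TopologicalSpace (E x)] (hmk : ∀ x, IsInducing (@TotalSpace.mk B F E x))
    (t : B → Trivialization F (π F E)) (hmem : ∀ x, x ∈ (t x).baseSet)
    (hlin : ∀ x, (t x).IsLinear 𝕜) :
    ∃ _ : FiberBundle F E, VectorBundle 𝕜 F E := by
  let fiberBundle : FiberBundle F E :=
    { totalSpaceMk_isInducing' := hmk
      trivializationAtlas' := range t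
      trivializationAt' := t
      mem_baseSet_trivializationAt' := hmem
      trivialization_mem_atlas' := mem_range_self }
  refine ⟨fiberBundle, ?_, ?_⟩
  · rintro _ ⟨x, rfl⟩
    exact hlin x
  · rintro _ _ ⟨x, rfl⟩ ⟨y, rfl⟩
    exact continuousOn_coordChangeL_of_finiteDimensional (t x) (t y)

end Trivialization

section ComplexBundle

variable {X : Type*} [TopologicalSpace X] {E : X → Type*} [∀ x, AddCommGroup (E x)]
  [∀ x, Module ℝ (E x)] [∀ x, Module ℂ (E x)] [∀ x, IsScalarTower ℝ ℂ (E x)]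
  {F : Type*} [NormedAddCommGroup F] [NormedSpace ℝ F] [FiniteDimensional ℝ F]
  {F' : Type*} [NormedAddCommGroup F'] [NormedSpace ℂ F'] [TopologicalSpace (TotalSpace F E)]

/-- For a real trivialization `e` and a real-linear `φ : F → F'`, the `ℂ`-linear part of
`φ ∘ e : E x → F'`, regarded as an operator on the model fiber `F` by means of `e`. -/
noncomputable def complexLinearPartIn (e : Trivialization F (π F E)) [e.IsLinear ℝ]
    (φ : F →ₗ[ℝ] F') (x : X) : F →L[ℝ] F' :=
  LinearMap.toContinuousLinearMap <|
    (complexLinearPart (φ ∘ₗ e.linearMapAt ℝ x)).restrictScalars ℝ ∘ₗ e.symmₗ ℝ x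

variable (e : Trivialization F (π F E)) [e.IsLinear ℝ] (φ : F →ₗ[ℝ] F') {x : X}

lemma complexLinearPartIn_apply_snd (hx : x ∈ e.baseSet) (v : E x) :
    complexLinearPartIn e φ x (e ⟨x, v⟩).2 = complexLinearPart (φ ∘ₗ e.linearMapAt ℝ x) v := by
  simp [complexLinearPartIn, e.symmₗ_apply hx, e.symm_apply_apply_mk hx]

lemma complexLinearPartIn_apply (hx : x ∈ e.baseSet) (f : F) :
    complexLinearPartIn e φ x f =
      (1 / 2 : ℂ) • (φ f - Complex.I • φ (e ⟨x, Complex.I • e.symm x f⟩).2) := by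
  simp [complexLinearPartIn, complexLinearPart_apply, hx, e.symmₗ_apply hx, e.apply_mk_symm hx]

lemma continuousOn_complexLinearPartIn
    (hI : Continuous fun p : TotalSpace F E => TotalSpace.mk' F p.1 (Complex.I • p.2)) :
    ContinuousOn (complexLinearPartIn e φ) e.baseSet := by
  refine continuousOn_clm_apply.2 fun f => ?_
  have hsymm : ContinuousOn (fun x => TotalSpace.mk' F x (e.symm x f)) e.baseSet :=
    e.continuousOn_symm.comp (f := fun x => (x, f)) (by fun_prop) fun x hx => ⟨hx, mem_univ _⟩
  have hread : ContinuousOn (fun x => (e ⟨x, Complex.I • e.symm x f⟩).2) e.baseSet :=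
    (e.continuousOn.comp (hI.comp_continuousOn hsymm) fun x hx => e.mem_source.2 hx).snd
  have hφ : Continuous φ := φ.continuous_of_finiteDimensional
  exact ContinuousOn.congr (by fun_prop) fun x hx => complexLinearPartIn_apply e φ hx f

lemma isInvertible_complexLinearPartIn (hx : x ∈ e.baseSet) (ψ : E x ≃ₗ[ℂ] F') :
    (complexLinearPartIn e (ψ.toLinearMap.restrictScalars ℝ ∘ₗ e.symmₗ ℝ x) x).IsInvertible := by
  let φ : F ≃ₗ[ℝ] F' := (e.linearEquivAt ℝ x hx).symm.trans (ψ.restrictScalars ℝ)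
  refine ⟨φ.toContinuousLinearEquiv, ?_⟩
  have hψ : ψ.toLinearMap.restrictScalars ℝ ∘ₗ e.symmₗ ℝ x ∘ₗ e.linearMapAt ℝ x =
      ψ.toLinearMap.restrictScalars ℝ := by
    ext v
    simp [hx]
  ext f
  simp [complexLinearPartIn, LinearMap.comp_assoc, hψ, complexLinearPart_restrictScalars, φ,
    e.symmₗ_apply hx]

/-- The identity on each fiber, as a bijection between the total spaces of `E` with different
model fibers. -/
def totalSpaceModelChange {B : Type*} (F F' : Type*) (E : B → Type*) :
    TotalSpace F E ≃ TotalSpace F' E where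
  toFun p := ⟨p.1, p.2⟩
  invFun p := ⟨p.1, p.2⟩

variable [TopologicalSpace (TotalSpace F' E)]

lemma exists_isLinear_complex_trivialization
    (hI : Continuous fun p : TotalSpace F E => TotalSpace.mk' F p.1 (Complex.I • p.2))
    (hmodel : IsInducing (totalSpaceModelChange F' F E))
    (hx : x ∈ e.baseSet) (ψ : E x ≃ₗ[ℂ] F') :
    ∃ t : Trivialization F' (π F' E), x ∈ t.baseSet ∧ t.IsLinear ℂ := by
  let φ : F →ₗ[ℝ] F' := ψ.toLinearMap.restrictScalars ℝ ∘ₗ e.symmₗ ℝ x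
  let e' : Trivialization F (π F' E) :=
    e.compHomeomorph ((totalSpaceModelChange F' F E).toHomeomorphOfIsInducing hmodel)
  let t : Trivialization F' (π F' E) :=
    twistedTrivialization e' (complexLinearPartIn e φ) (continuousOn_complexLinearPartIn e φ hI)
  refine ⟨t, ⟨hx, isInvertible_complexLinearPartIn e hx ψ⟩, ⟨fun y hy => ?_⟩⟩
  have ht : (fun v : E y => (t ⟨y, v⟩).2) = complexLinearPart (φ ∘ₗ e.linearMapAt ℝ y) := by
    funext v
    have htwist : t ⟨y, v⟩ = (y, complexLinearPartIn e φ y (e ⟨y, v⟩).2) :=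
      twistedTrivialization_apply e' _ _ (z := ⟨y, v⟩) hy.1
    rw [htwist, complexLinearPartIn_apply_snd e φ hy.1]
  rw [ht]
  exact LinearMap.isLinear _

lemma exists_complex_vectorBundle [FiniteDimensional ℂ F'] [∀ x, TopologicalSpace (E x)]
    [FiberBundle F E] [VectorBundle ℝ F E]
    (hI : Continuous fun p : TotalSpace F E => TotalSpace.mk' F p.1 (Complex.I • p.2))
    (hmodel : IsInducing (totalSpaceModelChange F' F E))
    (hfiber : ∀ x, Nonempty (E x ≃ₗ[ℂ] F')) :
    ∃ _ : FiberBundle F' E, VectorBundle ℂ F' E := by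
  have hmk (x : X) : IsInducing (@TotalSpace.mk X F' E x) :=
    hmodel.of_comp_iff.1 (FiberBundle.totalSpaceMk_isInducing F E x)
  choose t hmem hlin using fun x => exists_isLinear_complex_trivialization
    (trivializationAt F E x) hI hmodel (FiberBundle.mem_baseSet_trivializationAt F E x)
    (hfiber x).some
  exact exists_vectorBundle_of_isLinear hmk t hmem hlin

end ComplexBundle

/-- If a topological `ℝ`-vector bundle `E` over `X` with finite-dimensional model fiber `F`
carries a vector bundle endomorphism `I` covering the identity with `I_x ∘ I_x = -id` on every
fiber, then the fibers become complex vector spaces via `(a + b i) • v = a • v + b • I_x v`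
(extending the real scalar multiplication), and with these complex structures `E` is a
topological `ℂ`-vector bundle over `X` (with unchanged total space topology). -/
theorem stmt0 {X : Type*} [TopologicalSpace X]
    (F : Type*) [NormedAddCommGroup F] [NormedSpace ℝ F] [FiniteDimensional ℝ F]
    (E : X → Type*) [∀ x, AddCommGroup (E x)] [∀ x, Module ℝ (E x)]
    [∀ x, TopologicalSpace (E x)] [TopologicalSpace (Bundle.TotalSpace F E)]
    [FiberBundle F E] [VectorBundle ℝ F E]
    (I : ∀ x, E x →ₗ[ℝ] E x)
    (hIcont : Continuous fun p : Bundle.TotalSpace F E =>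
      (Bundle.TotalSpace.mk' F p.1 (I p.1 p.2)))
    (hI2 : ∀ x (v : E x), I x (I x v) = -v) :
    ∃ m : ∀ x, Module ℂ (E x),
      (∀ x (a : ℝ) (v : E x), modSMul (m x) ((a : ℂ)) v = a • v) ∧
      (∀ x (a b : ℝ) (v : E x),
        modSMul (m x) (a + b * Complex.I) v = a • v + b • I x v) ∧
      ∃ tE' : TopologicalSpace
          (Bundle.TotalSpace (Fin (Module.finrank ℝ F / 2) → ℂ) E),
        (@Continuous _ _ _ tE' fun p : Bundle.TotalSpace F E =>
          (Bundle.TotalSpace.mk' (Fin (Module.finrank ℝ F / 2) → ℂ) p.1 p.2)) ∧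
        (@Continuous _ _ tE' _ fun p : Bundle.TotalSpace (Fin (Module.finrank ℝ F / 2) → ℂ) E =>
          (Bundle.TotalSpace.mk' F p.1 p.2)) ∧
        IsComplexVectorBundle (Fin (Module.finrank ℝ F / 2) → ℂ) E m tE' := by
  let m (x : X) : Module ℂ (E x) := complexModuleOf (I x) (hI2 x)
  have hm (x : X) (c : ℂ) (v : E x) : modSMul (m x) c v = c.re • v + c.im • I x v :=
    modSMul_complexModuleOf (I x) (hI2 x) c v
  have htower (x : X) : IsScalarTower ℝ ℂ (E x) := isScalarTower_complexModuleOf (I x) (hI2 x)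
  have hIsmul (x : X) (v : E x) : Complex.I • v = I x v := (hm x Complex.I v).trans (by simp)
  have hfiber (x : X) : Nonempty (E x ≃ₗ[ℂ] (Fin (Module.finrank ℝ F / 2) → ℂ)) := by
    let e := (trivializationAt F E x).linearEquivAt ℝ x
      (FiberBundle.mem_baseSet_trivializationAt F E x)
    have : FiniteDimensional ℝ (E x) := e.symm.finiteDimensional
    rw [← e.finrank_eq]
    exact nonempty_linearEquiv_fin_half_finrank
  let tE' := TopologicalSpace.induced
    (totalSpaceModelChange (Fin (Module.finrank ℝ F / 2) → ℂ) F E) inferInstance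
  have hmodel : IsInducing (totalSpaceModelChange (Fin (Module.finrank ℝ F / 2) → ℂ) F E) := ⟨rfl⟩
  refine ⟨m, fun x a v => by simp [hm], fun x a b v => by simp [hm], tE',
    hmodel.continuous_iff.2 continuous_id, hmodel.continuous, ?_⟩
  exact exists_complex_vectorBundle (by simpa only [hIsmul] using hIcont) hmodel hfiber
end

section
/- Let p, q ∈ ℕ. Any two simple modules over the Clifford algebra Cl_{p,q} are Cl_{p,q}-linearly isomorphic if and only if the residue of p − q modulo 8 lies in {0, 2, 3, 4, 6, 7}. -/
/-- The quadratic form of signature `(p, q)` on `ℝ^{p+q}`: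
`x ↦ x₁² + ⋯ + x_p² - x_{p+1}² - ⋯ - x_{p+q}²`. -/
noncomputable def Qpq (p q : ℕ) : QuadraticForm ℝ (Fin (p + q) → ℝ) :=
  QuadraticMap.weightedSumSquares ℝ (fun i : Fin (p + q) => if (i : ℕ) < p then (1 : ℝ) else -1)

/-!
The residue condition says that `n = p + q` is even or that the square `±1` of the volume element
`v = e₁ ⋯ eₙ` is not a square in `ℝ`.

The twisted commutator `m x - involute x m` with a vector `m` is the contraction of `x` against the
polar form of `m`. For a nondegenerate form every contraction arises in this way, so a nonzero
two-sided ideal stable under the grading involution is stable under all contractions, and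
contracting an element of it as long as possible produces a nonzero scalar: the Clifford algebra is
graded simple. For the same reason a central even element is a scalar.

If a two-sided ideal `I` of a graded simple ring is neither `0` nor everything, then the ring is the
direct sum of `I` and its conjugate, and the difference of the two resulting central idempotents is
an odd central square root `z` of `1`. In the Clifford algebra `z` commutes with `v`; this is
impossible for even `n`, and for odd `n` it makes `z v` a scalar whose square is `v²`. Hence `z`
exists if and only if `n` is odd and `v²` is a square. If it exists, some simple module is killed by
`1 + z` and another by `1 - z`; if not, the algebra is simple Artinian and has only one simple
module.
-/

section SimpleModules

variable {A : Type*} [Ring A]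

theorem nonempty_linearEquiv_of_isSimpleRing [IsSimpleRing A] [IsArtinianRing A]
    (M N : Type*) [AddCommGroup M] [Module A M] [AddCommGroup N] [Module A N]
    [IsSimpleModule A M] [IsSimpleModule A N] : Nonempty (M ≃ₗ[A] N) := by
  obtain ⟨I, ⟨f⟩⟩ := IsSemisimpleRing.exists_linearEquiv_ideal_of_isSimpleModule A M
  obtain ⟨J, ⟨g⟩⟩ := IsSemisimpleRing.exists_linearEquiv_ideal_of_isSimpleModule A N
  have := IsSimpleModule.congr f.symm
  have := IsSimpleModule.congr g.symm
  obtain ⟨h⟩ := IsSimpleRing.isIsotypic A A J I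
  exact ⟨f ≪≫ₗ h ≪≫ₗ g.symm⟩

theorem exists_isSimpleModule_mem_annihilator {z : A} (hz : z ∈ Subring.center A)
    (hu : ¬IsUnit z) :
    ∃ J : Ideal A, IsSimpleModule A (A ⧸ J) ∧ z ∈ Module.annihilator A (A ⧸ J) := by
  have hcomm := Subring.mem_center_iff.1 hz
  have hne : Ideal.span {z} ≠ ⊤ := by
    rw [Ne, Ideal.eq_top_iff_one, Ideal.mem_span_singleton']
    rintro ⟨a, ha⟩
    exact hu ⟨⟨z, a, by rw [← hcomm, ha], ha⟩, rfl⟩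
  obtain ⟨J, hJ, hle⟩ := Ideal.exists_le_maximal _ hne
  refine ⟨J, isSimpleModule_iff_isCoatom.2 hJ.out, Module.mem_annihilator.2 fun v => ?_⟩
  obtain ⟨x, rfl⟩ := Submodule.Quotient.mk_surjective J v
  rw [← Submodule.Quotient.mk_smul, Submodule.Quotient.mk_eq_zero, smul_eq_mul, ← hcomm]
  exact J.mul_mem_left x (hle (Ideal.mem_span_singleton_self z))

theorem exists_isEmpty_linearEquiv_of_isUnit_add {y z : A} (hy : y ∈ Subring.center A)
    (hz : z ∈ Subring.center A) (huy : ¬IsUnit y) (huz : ¬IsUnit z) (hu : IsUnit (y + z)) :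
    ∃ I J : Ideal A, IsSimpleModule A (A ⧸ I) ∧ IsSimpleModule A (A ⧸ J) ∧
      IsEmpty ((A ⧸ I) ≃ₗ[A] (A ⧸ J)) := by
  obtain ⟨I, hI, hyI⟩ := exists_isSimpleModule_mem_annihilator hy huy
  obtain ⟨J, hJ, hzJ⟩ := exists_isSimpleModule_mem_annihilator hz huz
  refine ⟨I, J, hI, hJ, ⟨fun f => ?_⟩⟩
  rw [← f.annihilator_eq] at hzJ
  have htop := Ideal.eq_top_of_isUnit_mem _ (add_mem hyI hzJ) hu
  have := IsSimpleModule.nontrivial A (A ⧸ I)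
  exact not_subsingleton (A ⧸ I) (Module.annihilator_eq_top_iff.1 htop)

end SimpleModules

/-- An odd central involution of a ring with an automorphism `σ` of order two, the latter read as
a `ℤ/2`-grading: a central square root of `1` that `σ` negates. Such elements are the obstruction to
passing from graded simplicity to simplicity. -/
structure IsOddCentralInvolution {A : Type*} [Ring A] (σ : A →+* A) (z : A) : Prop where
  mem_center : z ∈ Subring.center A
  map_eq_neg : σ z = -z
  mul_self : z * z = 1

section OddCentralInvolution

variable {A : Type*} [Ring A] {σ : A →+* A} {z : A}

theorem IsOddCentralInvolution.exists_isSimpleModule_isEmpty_linearEquiv [Nontrivial A]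
    (hz : IsOddCentralInvolution σ z) (h2 : IsUnit (2 : A)) :
    ∃ I J : Ideal A, IsSimpleModule A (A ⧸ I) ∧ IsSimpleModule A (A ⧸ J) ∧
      IsEmpty ((A ⧸ I) ≃ₗ[A] (A ⧸ J)) := by
  have one_ne_neg_one : (1 : A) ≠ -1 := fun h =>
    h2.ne_zero (by rw [← one_add_one_eq_two]; exact eq_neg_iff_add_eq_zero.1 h)
  have hprod : (1 + z) * (1 - z) = 0 := by
    rw [← (Commute.one_left z).mul_self_sub_mul_self_eq, hz.mul_self, one_mul, sub_self]
  have hprod' : (1 - z) * (1 + z) = 0 := by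
    rw [← (Commute.one_left z).mul_self_sub_mul_self_eq', hz.mul_self, one_mul, sub_self]
  have one_add_not_isUnit : ¬IsUnit (1 + z) := fun hu => by
    have hz1 : z = 1 := (sub_eq_zero.1 (hu.mul_right_eq_zero.1 hprod)).symm
    exact one_ne_neg_one (by simpa [hz1] using hz.map_eq_neg)
  have one_sub_not_isUnit : ¬IsUnit (1 - z) := fun hu => by
    have hz1 : z = -1 := (neg_eq_of_add_eq_zero_right (hu.mul_right_eq_zero.1 hprod')).symm
    exact one_ne_neg_one (by simpa [hz1, eq_comm] using hz.map_eq_neg)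
  exact exists_isEmpty_linearEquiv_of_isUnit_add (add_mem (one_mem _) hz.mem_center)
    (sub_mem (one_mem _) hz.mem_center) one_add_not_isUnit one_sub_not_isUnit
    (by rwa [add_add_sub_cancel, one_add_one_eq_two])

theorem mul_eq_zero_of_disjoint {I J : TwoSidedIdeal A} (hIJ : Disjoint I J) {x y : A}
    (hx : x ∈ I) (hy : y ∈ J) : x * y = 0 :=
  (TwoSidedIdeal.mem_bot A).1 <| hIJ.le_bot <|
    (TwoSidedIdeal.mem_inf A).2 ⟨I.mul_mem_right _ _ hx, J.mul_mem_left _ _ hy⟩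

theorem mem_center_of_disjoint_of_add_eq_one {I J : TwoSidedIdeal A} (hIJ : Disjoint I J)
    {u v : A} (hu : u ∈ I) (hv : v ∈ J) (huv : u + v = 1) : u ∈ Subring.center A := by
  refine Subring.mem_center_iff.2 fun x => ?_
  calc x * u = (u + v) * (x * u) := by rw [huv, one_mul]
    _ = u * x * (u + v) := by
      rw [add_mul, mul_add, mul_eq_zero_of_disjoint hIJ.symm hv (I.mul_mem_left _ _ hu),
        mul_eq_zero_of_disjoint hIJ (I.mul_mem_right _ _ hu) hv, mul_assoc]
    _ = u * x := by rw [huv, mul_one]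

theorem map_eq_of_disjoint_comap (hσ : Function.Involutive σ) {I : TwoSidedIdeal A}
    (hI : Disjoint I (I.comap σ)) {u v : A} (hu : u ∈ I) (hv : σ v ∈ I) (huv : u + v = 1) :
    σ v = u := by
  have hσuv : σ u + σ v = u + v := by rw [← map_add, huv, map_one]
  have hσ_sub : σ (σ v - u) = σ v - u := by
    rw [map_sub, hσ v, sub_eq_sub_iff_add_eq_add, add_comm v, ← hσuv, add_comm]
  have hmem : σ v - u ∈ I := I.sub_mem hv hu
  refine sub_eq_zero.1 ((TwoSidedIdeal.mem_bot A).1 (hI.le_bot ?_))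
  exact (TwoSidedIdeal.mem_inf A).2 ⟨hmem, (TwoSidedIdeal.mem_comap σ).2 (hσ_sub.symm ▸ hmem)⟩

theorem exists_isOddCentralInvolution_of_isCompl (hσ : Function.Involutive σ)
    {I : TwoSidedIdeal A} (hI : IsCompl I (I.comap σ)) : ∃ z, IsOddCentralInvolution σ z := by
  have mem_top : (1 : A) ∈ I ⊔ I.comap σ := hI.sup_eq_top ▸ trivial
  obtain ⟨u, hu, v, hv, huv⟩ := TwoSidedIdeal.mem_sup.1 mem_top
  have hσv : σ v = u :=
    map_eq_of_disjoint_comap hσ hI.disjoint hu ((TwoSidedIdeal.mem_comap σ).1 hv) huv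
  have hσu : σ u = v := by rw [← hσv, hσ v]
  have hu_center := mem_center_of_disjoint_of_add_eq_one hI.disjoint hu hv huv
  have hv_center :=
    mem_center_of_disjoint_of_add_eq_one hI.symm.disjoint hv hu (by rw [add_comm, huv])
  have huv_zero : u * v = 0 := mul_eq_zero_of_disjoint hI.disjoint hu hv
  have hvu_zero : v * u = 0 := mul_eq_zero_of_disjoint hI.symm.disjoint hv hu
  refine ⟨u - v, sub_mem hu_center hv_center, by rw [map_sub, hσu, hσv, neg_sub], ?_⟩
  calc (u - v) * (u - v) = (u + v) * (u + v) := by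
        simp only [sub_mul, mul_sub, add_mul, mul_add, huv_zero, hvu_zero]
        abel
    _ = 1 := by rw [huv, one_mul]

theorem isSimpleRing_of_forall_le_comap [Nontrivial A] (hσ : Function.Involutive σ)
    (hgr : ∀ I : TwoSidedIdeal A, I ≤ I.comap σ → I = ⊥ ∨ I = ⊤)
    (hodd : ¬∃ z, IsOddCentralInvolution σ z) : IsSimpleRing A := by
  refine IsSimpleRing.of_eq_bot_or_eq_top fun I => ?_
  by_contra! hI
  have hcomap : (I.comap σ).comap σ = I := by
    ext x; simp only [TwoSidedIdeal.mem_comap, hσ x]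
  have hinf : I ⊓ I.comap σ = ⊥ := by
    refine (hgr _ ?_).resolve_right fun h => hI.2 (eq_top_iff.2 (h ▸ inf_le_left))
    intro x hx
    rw [TwoSidedIdeal.mem_inf A, TwoSidedIdeal.mem_comap] at hx
    rw [TwoSidedIdeal.mem_comap, TwoSidedIdeal.mem_inf A, TwoSidedIdeal.mem_comap, hσ x]
    exact hx.symm
  have hsup : I ⊔ I.comap σ = ⊤ := by
    refine (hgr _ (sup_le ?_ ?_)).resolve_left fun h => hI.1 (eq_bot_iff.2 (h ▸ le_sup_left))
    · exact hcomap.symm.le.trans (TwoSidedIdeal.comap_le_comap σ le_sup_right)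
    · exact TwoSidedIdeal.comap_le_comap σ le_sup_left
  exact hodd (exists_isOddCentralInvolution_of_isCompl hσ (.of_eq hinf hsup))

end OddCentralInvolution

theorem toSubmodule_adjoin_le {R A : Type*} [CommSemiring R] [Semiring A] [Algebra R A]
    {s : Set A} {N : Submodule R A} (one_mem : 1 ∈ N) (mul_mem : ∀ a ∈ s, ∀ x ∈ N, a * x ∈ N) :
    Subalgebra.toSubmodule (Algebra.adjoin R s) ≤ N := by
  rw [Algebra.adjoin_eq_span, Submodule.span_le]
  intro x hx
  induction hx using Submonoid.closure_induction_left with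
  | one => exact one_mem
  | mul_left a ha x _ hx => exact mul_mem a ha x hx

open CliffordAlgebra

section Contraction

variable {R M : Type*} [CommRing R] [AddCommGroup M] [Module R M] {Q : QuadraticForm R M}

theorem ι_mul_sub_involute_mul_ι (m : M) (x : CliffordAlgebra Q) :
    ι Q m * x - involute x * ι Q m = contractLeft (Q.polarBilin m) x := by
  induction x using CliffordAlgebra.left_induction with
  | algebraMap r =>
    rw [AlgHom.commutes, contractLeft_algebraMap, Algebra.commutes, sub_self]
  | add x y hx hy =>
    rw [map_add, map_add, ← hx, ← hy, mul_add, add_mul, add_sub_add_comm]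
  | ι_mul x m' hx =>
    rw [contractLeft_ι_mul, ← hx, map_mul, involute_ι, QuadraticMap.polarBilin_apply_apply,
      Algebra.smul_def, ← ι_mul_ι_add_swap]
    noncomm_ring

theorem contractLeft_eq_zero_of_mem_adjoin {d : Module.Dual R M} {s : Set M}
    (hd : ∀ m ∈ s, d m = 0) {x : CliffordAlgebra Q} (hx : x ∈ Algebra.adjoin R (ι Q '' s)) :
    contractLeft d x = 0 := by
  have hle : Subalgebra.toSubmodule (Algebra.adjoin R (ι Q '' s)) ≤ (contractLeft d).ker := by
    refine toSubmodule_adjoin_le (contractLeft_one Q d) ?_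
    rintro _ ⟨m, hm, rfl⟩ x hx
    rw [LinearMap.mem_ker] at hx ⊢
    rw [contractLeft_ι_mul, hd m hm, hx, zero_smul, mul_zero, sub_zero]
  exact hle hx

theorem toSubmodule_adjoin_insert_le (Q : QuadraticForm R M) (m : M) (s : Set M) :
    Subalgebra.toSubmodule (Algebra.adjoin R (ι Q '' insert m s)) ≤
      Subalgebra.toSubmodule (Algebra.adjoin R (ι Q '' s)) ⊔
        (Subalgebra.toSubmodule (Algebra.adjoin R (ι Q '' s))).map
          (LinearMap.mulLeft R (ι Q m)) := by
  set S := Algebra.adjoin R (ι Q '' s)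
  have add_mem_sup {a b : CliffordAlgebra Q} (ha : a ∈ S) (hb : b ∈ S) :
      a + ι Q m * b ∈ Subalgebra.toSubmodule S ⊔
        (Subalgebra.toSubmodule S).map (LinearMap.mulLeft R (ι Q m)) :=
    Submodule.add_mem_sup ha (Submodule.mem_map_of_mem hb)
  refine toSubmodule_adjoin_le (Submodule.mem_sup_left S.one_mem) ?_
  rintro _ ⟨m', hm', rfl⟩ x hx
  obtain ⟨a, ha, _, ⟨b, hb, rfl⟩, rfl⟩ := Submodule.mem_sup.1 hx
  rw [LinearMap.mulLeft_apply]
  rw [Subalgebra.coe_toSubmodule, SetLike.mem_coe] at hb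
  rw [Subalgebra.mem_toSubmodule] at ha
  obtain rfl | hm' := hm'
  · rw [mul_add, ← mul_assoc, ι_sq_scalar, add_comm, ← Algebra.smul_def]
    exact add_mem_sup (S.smul_mem hb _) ha
  · have hιm' : ι Q m' ∈ S := Algebra.subset_adjoin (Set.mem_image_of_mem _ hm')
    have expand : ι Q m' * (a + ι Q m * b) =
        (ι Q m' * a + QuadraticMap.polar Q m' m • b) + ι Q m * (-(ι Q m' * b)) := by
      rw [mul_add, ← mul_assoc, ι_mul_ι_comm, Algebra.smul_def]
      noncomm_ring
    rw [expand]
    exact add_mem_sup (S.add_mem (S.mul_mem hιm' ha) (S.smul_mem hb _))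
      (S.neg_mem (S.mul_mem hιm' hb))

theorem adjoin_ι_image_eq_top {s : Set M} (hs : Submodule.span R s = ⊤) :
    Algebra.adjoin R (ι Q '' s) = ⊤ := by
  rw [← Algebra.adjoin_span, Submodule.span_image, hs, Submodule.map_top, LinearMap.coe_range,
    adjoin_range_ι]

theorem fg_adjoin_ι_image (Q : QuadraticForm R M) {s : Set M} (hs : s.Finite) :
    (Subalgebra.toSubmodule (Algebra.adjoin R (ι Q '' s))).FG := by
  induction s, hs using Set.Finite.induction_on with
  | empty => rw [Set.image_empty, Algebra.adjoin_empty]; exact Subalgebra.fg_bot_toSubmodule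
  | @insert m s _ _ ih =>
    have hle : Algebra.adjoin R (ι Q '' s) ≤ Algebra.adjoin R (ι Q '' insert m s) :=
      Algebra.adjoin_mono (Set.image_mono (Set.subset_insert m s))
    have hιm : ι Q m ∈ Algebra.adjoin R (ι Q '' insert m s) :=
      Algebra.subset_adjoin (Set.mem_image_of_mem _ (Set.mem_insert m s))
    rw [(toSubmodule_adjoin_insert_le Q m s).antisymm]
    · exact ih.sup (ih.map _)
    · refine sup_le hle (Submodule.map_le_iff_le_comap.2 fun x hx => ?_)
      exact mul_mem hιm (hle hx)

theorem finite_cliffordAlgebra [Module.Finite R M] (Q : QuadraticForm R M) :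
    Module.Finite R (CliffordAlgebra Q) := by
  obtain ⟨s, hs⟩ := Module.Finite.fg_top (R := R) (M := M)
  have hfg := fg_adjoin_ι_image Q s.finite_toSet
  rw [adjoin_ι_image_eq_top hs, Algebra.top_toSubmodule] at hfg
  exact ⟨hfg⟩

theorem mem_adjoin_of_contractLeft_eq_zero {m : M} {s : Set M} {d : Module.Dual R M}
    (hdm : d m = 1) (hds : ∀ m' ∈ s, d m' = 0) {x : CliffordAlgebra Q}
    (hx : x ∈ Algebra.adjoin R (ι Q '' insert m s)) (hdx : contractLeft d x = 0) :
    x ∈ Algebra.adjoin R (ι Q '' s) := by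
  obtain ⟨a, ha, _, ⟨b, hb, rfl⟩, rfl⟩ :=
    Submodule.mem_sup.1 (toSubmodule_adjoin_insert_le Q m s hx)
  have hb_zero : b = 0 := by
    rwa [map_add, contractLeft_eq_zero_of_mem_adjoin hds ha, zero_add, LinearMap.mulLeft_apply,
      contractLeft_ι_mul, contractLeft_eq_zero_of_mem_adjoin hds hb, hdm, one_smul, mul_zero,
      sub_zero] at hdx
  rwa [hb_zero, map_zero, add_zero]

theorem mem_bot_of_forall_contractLeft_coord_eq_zero {n : Type*} [Finite n]
    (b : Module.Basis n R M) {x : CliffordAlgebra Q}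
    (hx : ∀ i, contractLeft (b.coord i) x = 0) : x ∈ (⊥ : Subalgebra R (CliffordAlgebra Q)) := by
  have hmem (t : Set n) (ht : t.Finite) :
      x ∈ Algebra.adjoin R (ι Q '' (b '' t)) → x ∈ (⊥ : Subalgebra R (CliffordAlgebra Q)) := by
    induction t, ht using Set.Finite.induction_on with
    | empty => rw [Set.image_empty, Set.image_empty, Algebra.adjoin_empty]; exact id
    | @insert i t hi _ ih =>
      rw [Set.image_insert_eq]
      refine fun h => ih (mem_adjoin_of_contractLeft_eq_zero (by simp) ?_ h (hx i))
      rintro _ ⟨j, hj, rfl⟩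
      rw [b.coord_apply, b.repr_self, Finsupp.single_eq_of_ne (ne_of_mem_of_not_mem hj hi).symm]
  refine hmem Set.univ Set.finite_univ ?_
  rw [Set.image_univ, adjoin_ι_image_eq_top b.span_eq]
  exact Algebra.mem_top

theorem exists_mem_forall_contractLeft_eq_zero {N : Submodule R (CliffordAlgebra Q)} (hN : N ≠ ⊥)
    (hd : ∀ d : Module.Dual R M, ∀ x ∈ N, contractLeft d x ∈ N) {t : Set (Module.Dual R M)}
    (ht : t.Finite) : ∃ x ∈ N, x ≠ 0 ∧ ∀ d ∈ t, contractLeft d x = 0 := by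
  induction t, ht using Set.Finite.induction_on with
  | empty =>
    obtain ⟨x, hxN, hx⟩ := N.ne_bot_iff.1 hN
    exact ⟨x, hxN, hx, by simp⟩
  | @insert d t _ _ ih =>
    obtain ⟨x, hxN, hx, hxt⟩ := ih
    by_cases hdx : contractLeft d x = 0
    · exact ⟨x, hxN, hx, Set.forall_mem_insert.2 ⟨hdx, hxt⟩⟩
    · refine ⟨contractLeft d x, hd d x hxN, hdx, Set.forall_mem_insert.2 ⟨?_, fun d' hd' => ?_⟩⟩
      · exact contractLeft_contractLeft d x
      · rw [contractLeft_comm, hxt d' hd', map_zero, neg_zero]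

theorem exists_algebraMap_mem_of_contractLeft_mem [Module.Free R M] [Module.Finite R M]
    {N : Submodule R (CliffordAlgebra Q)} (hN : N ≠ ⊥)
    (hd : ∀ d : Module.Dual R M, ∀ x ∈ N, contractLeft d x ∈ N) :
    ∃ r : R, algebraMap R (CliffordAlgebra Q) r ∈ N ∧ algebraMap R (CliffordAlgebra Q) r ≠ 0 := by
  let b := Module.Free.chooseBasis R M
  obtain ⟨x, hxN, hx, hxd⟩ :=
    exists_mem_forall_contractLeft_eq_zero hN hd (Set.finite_range b.coord)
  obtain ⟨r, rfl⟩ := Algebra.mem_bot.1 <|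
    mem_bot_of_forall_contractLeft_coord_eq_zero b fun i => hxd _ (Set.mem_range_self i)
  exact ⟨r, hxN, hx⟩

end Contraction

section Nondegenerate

variable {K V : Type*} [Field K] [AddCommGroup V] [Module K V] [FiniteDimensional K V]
  {Q : QuadraticForm K V}

theorem exists_polarBilin_eq (hQ : Q.polarBilin.Nondegenerate) (d : Module.Dual K V) :
    ∃ m, Q.polarBilin m = d :=
  ⟨(LinearMap.BilinForm.toDual Q.polarBilin hQ).symm d, LinearMap.ext fun m =>
    LinearMap.BilinForm.apply_toDual_symm_apply d m⟩

theorem eq_bot_or_eq_top_of_le_comap_involute (hQ : Q.polarBilin.Nondegenerate)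
    {I : TwoSidedIdeal (CliffordAlgebra Q)}
    (hI : I ≤ I.comap (involute (Q := Q))) : I = ⊥ ∨ I = ⊤ := by
  refine or_iff_not_imp_left.2 fun hne => ?_
  have hN : I.asIdeal.restrictScalars K ≠ ⊥ := fun h => hne <| by
    rw [Submodule.restrictScalars_eq_bot_iff] at h
    exact eq_bot_iff.2 fun x hx => h.le (TwoSidedIdeal.mem_asIdeal.2 hx)
  obtain ⟨r, hrI, hr⟩ := exists_algebraMap_mem_of_contractLeft_mem hN fun d x hx => by
    rw [Submodule.restrictScalars_mem, TwoSidedIdeal.mem_asIdeal] at hx ⊢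
    obtain ⟨m, rfl⟩ := exists_polarBilin_eq hQ d
    rw [← ι_mul_sub_involute_mul_ι]
    exact I.sub_mem (I.mul_mem_left _ _ hx)
      (I.mul_mem_right _ _ ((TwoSidedIdeal.mem_comap _).1 (hI hx)))
  have hr0 : r ≠ 0 := fun h => hr (by rw [h, map_zero])
  rw [← TwoSidedIdeal.one_mem_iff, ← map_one (algebraMap K _), ← inv_mul_cancel₀ hr0, map_mul]
  exact I.mul_mem_left _ _ hrI

theorem mem_bot_of_mem_center_of_involute_eq (hQ : Q.polarBilin.Nondegenerate)
    {x : CliffordAlgebra Q} (hx : x ∈ Subring.center (CliffordAlgebra Q))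
    (hinv : involute x = x) : x ∈ (⊥ : Subalgebra K (CliffordAlgebra Q)) := by
  refine mem_bot_of_forall_contractLeft_coord_eq_zero (Module.finBasis K V) fun i => ?_
  obtain ⟨m, hm⟩ := exists_polarBilin_eq hQ ((Module.finBasis K V).coord i)
  rw [← hm, ← ι_mul_sub_involute_mul_ι, hinv, Subring.mem_center_iff.1 hx, sub_self]

end Nondegenerate

section VolumeElement

section CommRing

variable {R M : Type*} [CommRing R] [AddCommGroup M] [Module R M] {Q : QuadraticForm R M}

theorem prod_map_ι_mul_ι_of_isOrtho {a : M} {l : List M} (h : ∀ b ∈ l, Q.IsOrtho a b) :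
    (l.map (ι Q)).prod * ι Q a = (-1 : R) ^ l.length • (ι Q a * (l.map (ι Q)).prod) := by
  induction l with
  | nil => simp
  | cons b l ih =>
    rw [List.forall_mem_cons] at h
    rw [List.map_cons, List.prod_cons, mul_assoc, ih h.2, mul_smul_comm, ← mul_assoc, ← mul_assoc,
      ι_mul_ι_comm_of_isOrtho h.1.symm, List.length_cons, pow_succ', mul_smul, neg_one_smul,
      neg_mul, smul_neg]

theorem prod_map_ι_mul_self {l : List M} (hl : l.Pairwise Q.IsOrtho) :
    (l.map (ι Q)).prod * (l.map (ι Q)).prod =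
      algebraMap R _ ((-1) ^ l.length.choose 2 * (l.map Q).prod) := by
  induction l with
  | nil => simp
  | cons a l ih =>
    rw [List.pairwise_cons] at hl
    rw [List.map_cons, List.prod_cons]
    set P := (l.map (ι Q)).prod
    calc ι Q a * P * (ι Q a * P) = ι Q a * (P * ι Q a) * P := by noncomm_ring
      _ = (-1 : R) ^ l.length • (ι Q a * ι Q a * (P * P)) := by
        rw [prod_map_ι_mul_ι_of_isOrtho hl.1, mul_smul_comm, smul_mul_assoc]; noncomm_ring
      _ = algebraMap R _ ((-1) ^ (a :: l).length.choose 2 * ((a :: l).map Q).prod) := by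
        rw [ι_sq_scalar, ih hl.2, Algebra.smul_def, ← map_mul, ← map_mul, List.length_cons,
          Nat.choose_succ_succ', Nat.choose_one_right, List.map_cons, List.prod_cons, pow_add]
        congr 1; ring

theorem prod_map_ι_mul_ι_of_mem {a : M} {l : List M} (hl : l.Pairwise Q.IsOrtho) (ha : a ∈ l) :
    (l.map (ι Q)).prod * ι Q a = (-1 : R) ^ (l.length + 1) • (ι Q a * (l.map (ι Q)).prod) := by
  induction l with
  | nil => simp at ha
  | cons b l ih =>
    rw [List.pairwise_cons] at hl
    rw [List.map_cons, List.prod_cons, mul_assoc, List.length_cons]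
    obtain rfl | ha := List.mem_cons.1 ha
    · rw [prod_map_ι_mul_ι_of_isOrtho hl.1, mul_smul_comm, pow_succ, pow_succ, mul_assoc,
        neg_one_mul, neg_neg, mul_one]
    · rw [ih hl.2 ha, mul_smul_comm, ← mul_assoc, ← mul_assoc,
        ι_mul_ι_comm_of_isOrtho (hl.1 a ha), pow_succ' _ (l.length + 1), mul_smul, neg_one_smul,
        neg_mul, smul_neg]

theorem mul_eq_map_mul_of_forall_ι {f : CliffordAlgebra Q →ₐ[R] CliffordAlgebra Q}
    {v : CliffordAlgebra Q} (hv : ∀ m, v * ι Q m = f (ι Q m) * v) (x : CliffordAlgebra Q) :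
    v * x = f x * v := by
  induction x using CliffordAlgebra.left_induction with
  | algebraMap r => rw [AlgHom.commutes, Algebra.commutes]
  | add x y hx hy => rw [mul_add, hx, hy, map_add, add_mul]
  | ι_mul x m hx => rw [← mul_assoc, hv, mul_assoc, hx, map_mul, mul_assoc]

/-- The volume element `e₁ ⋯ eₙ` of a family of vectors, usually an orthogonal basis, in the
Clifford algebra, multiplied in increasing order of the indices. -/
def volumeElement (Q : QuadraticForm R M) {n : ℕ} (e : Fin n → M) : CliffordAlgebra Q :=
  ((List.ofFn e).map (ι Q)).prod

variable {n : ℕ}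

theorem involute_volumeElement (e : Fin n → M) :
    involute (volumeElement Q e) = (-1 : R) ^ n • volumeElement Q e := by
  rw [volumeElement, involute_prod_map_ι, List.length_ofFn]

theorem pairwise_isOrtho_ofFn {e : Fin n → M} (he : Q.polarBilin.IsOrthoᵢ e) :
    (List.ofFn e).Pairwise Q.IsOrtho :=
  List.pairwise_ofFn.2 fun _ _ hij => QuadraticMap.isOrtho_polarBilin.1 (he hij.ne)

/-- The signed discriminant `(-1)^(n(n-1)/2) Q(e₁) ⋯ Q(eₙ)` of a quadratic form in an orthogonal
basis. The sign is that of the reversal `e₁ ⋯ eₙ ↦ eₙ ⋯ e₁`, which makes this scalar the square of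
the volume element. -/
def signedDiscriminant (Q : QuadraticForm R M) {n : ℕ} (e : Fin n → M) : R :=
  (-1) ^ n.choose 2 * ∏ i, Q (e i)

theorem volumeElement_mul_self {e : Fin n → M} (he : Q.polarBilin.IsOrthoᵢ e) :
    volumeElement Q e * volumeElement Q e = algebraMap R _ (signedDiscriminant Q e) := by
  rw [signedDiscriminant, volumeElement, prod_map_ι_mul_self (pairwise_isOrtho_ofFn he),
    List.length_ofFn, List.map_ofFn, List.prod_ofFn]
  rfl

theorem volumeElement_mul_ι (e : Module.Basis (Fin n) R M) (he : Q.polarBilin.IsOrthoᵢ e)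
    (m : M) :
    volumeElement Q e * ι Q m = (-1 : R) ^ (n + 1) • (ι Q m * volumeElement Q e) := by
  have hbasis : LinearMap.mulLeft R (volumeElement Q e) ∘ₗ ι Q =
      (-1 : R) ^ (n + 1) • (LinearMap.mulRight R (volumeElement Q e) ∘ₗ ι Q) :=
    e.ext fun i => by
      have hi := prod_map_ι_mul_ι_of_mem (pairwise_isOrtho_ofFn he) (List.mem_ofFn.2 ⟨i, rfl⟩)
      rwa [List.length_ofFn] at hi
  exact LinearMap.congr_fun hbasis m

theorem volumeElement_mem_center (hn : Odd n) (e : Module.Basis (Fin n) R M)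
    (he : Q.polarBilin.IsOrthoᵢ e) :
    volumeElement Q e ∈ Subring.center (CliffordAlgebra Q) := by
  refine Subring.mem_center_iff.2 fun x => ?_
  refine (mul_eq_map_mul_of_forall_ι (f := AlgHom.id R _) (fun m => ?_) x).symm
  rw [volumeElement_mul_ι e he, hn.add_one.neg_one_pow, one_smul, AlgHom.id_apply]

theorem volumeElement_mul (hn : Even n) (e : Module.Basis (Fin n) R M)
    (he : Q.polarBilin.IsOrthoᵢ e) (x : CliffordAlgebra Q) :
    volumeElement Q e * x = involute x * volumeElement Q e := by
  refine mul_eq_map_mul_of_forall_ι (fun m => ?_) x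
  rw [volumeElement_mul_ι e he, hn.add_one.neg_one_pow, neg_one_smul, involute_ι, neg_mul]

end CommRing

section Field

variable {K V : Type*} [Field K] [AddCommGroup V] [Module K V] {Q : QuadraticForm K V} {n : ℕ}

theorem signedDiscriminant_ne_zero {e : Fin n → V} (hQ : ∀ i, Q (e i) ≠ 0) :
    signedDiscriminant Q e ≠ 0 :=
  mul_ne_zero (pow_ne_zero _ (neg_ne_zero.2 one_ne_zero))
    (Finset.prod_ne_zero_iff.2 fun i _ => hQ i)

theorem exists_isOddCentralInvolution {e : Module.Basis (Fin n) K V}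
    (he : Q.polarBilin.IsOrthoᵢ e) (hQ : ∀ i, Q (e i) ≠ 0) (hn : Odd n)
    (hd : IsSquare (signedDiscriminant Q e)) :
    ∃ z : CliffordAlgebra Q, IsOddCentralInvolution (involute (Q := Q)) z := by
  obtain ⟨c, hc⟩ := hd
  have hc0 : c ≠ 0 := left_ne_zero_of_mul (hc ▸ signedDiscriminant_ne_zero hQ)
  have hv_center := volumeElement_mem_center hn e he
  refine ⟨c⁻¹ • volumeElement Q e, ?_, ?_, ?_⟩
  · rw [Algebra.smul_def]
    exact mul_mem (Subring.mem_center_iff.2 fun x => (Algebra.commutes _ x).symm) hv_center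
  · change involute (c⁻¹ • volumeElement Q e) = _
    rw [map_smul, involute_volumeElement, hn.neg_one_pow, neg_one_smul, smul_neg]
  · rw [smul_mul_smul_comm, volumeElement_mul_self he, hc, Algebra.smul_def, ← map_mul,
      mul_mul_mul_comm, inv_mul_cancel₀ hc0, one_mul, map_one]

variable [Invertible (2 : K)]

theorem nondegenerate_polarBilin {e : Module.Basis (Fin n) K V} (he : Q.polarBilin.IsOrthoᵢ e)
    (hQ : ∀ i, Q (e i) ≠ 0) : Q.polarBilin.Nondegenerate := by
  refine LinearMap.IsOrthoᵢ.nondegenerate_of_not_isOrtho_basis_self e he fun i hi => ?_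
  rw [QuadraticMap.polarBilin_apply_apply, QuadraticMap.polar_self, two_smul, ← two_mul] at hi
  exact hQ i ((mul_eq_zero_iff_left two_ne_zero).1 hi)

theorem volumeElement_ne_zero {e : Fin n → V} (he : Q.polarBilin.IsOrthoᵢ e)
    (hQ : ∀ i, Q (e i) ≠ 0) : volumeElement Q e ≠ 0 := by
  intro hv
  have hsq := volumeElement_mul_self he
  rw [hv, mul_zero, eq_comm, FaithfulSMul.algebraMap_eq_zero_iff] at hsq
  exact signedDiscriminant_ne_zero hQ hsq

variable {e : Module.Basis (Fin n) K V}

theorem odd_of_isOddCentralInvolution (he : Q.polarBilin.IsOrthoᵢ e) (hQ : ∀ i, Q (e i) ≠ 0)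
    {z : CliffordAlgebra Q} (hz : IsOddCentralInvolution (involute (Q := Q)) z) : Odd n := by
  by_contra hn
  set v := volumeElement Q e
  have hanti : z * v = -(z * v) := by
    rw [← neg_mul, ← hz.map_eq_neg, ← Subring.mem_center_iff.1 hz.mem_center]
    exact volumeElement_mul (Nat.not_odd_iff_even.1 hn) e he z
  have hzv : z * v = 0 := by
    have h2 : (2 : K) • (z * v) = 0 := by rw [two_smul]; nth_rw 2 [hanti]; exact add_neg_cancel _
    exact (smul_eq_zero_iff_right two_ne_zero).1 h2
  refine volumeElement_ne_zero he hQ ?_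
  calc v = z * z * v := by rw [hz.mul_self, one_mul]
    _ = 0 := by rw [mul_assoc, hzv, mul_zero]

theorem isSquare_of_isOddCentralInvolution (he : Q.polarBilin.IsOrthoᵢ e)
    (hQ : ∀ i, Q (e i) ≠ 0) (hn : Odd n) {z : CliffordAlgebra Q}
    (hz : IsOddCentralInvolution (involute (Q := Q)) z) :
    IsSquare (signedDiscriminant Q e) := by
  set v := volumeElement Q e with hv
  have hzv_center : z * v ∈ Subring.center (CliffordAlgebra Q) :=
    mul_mem hz.mem_center (volumeElement_mem_center hn e he)
  have hzv_even : involute (z * v) = z * v := by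
    rw [map_mul, hv, involute_volumeElement, hn.neg_one_pow, neg_one_smul, mul_neg, ← neg_mul]
    exact congrArg (· * v) (neg_eq_iff_eq_neg.2 hz.map_eq_neg)
  have := Module.Basis.finiteDimensional_of_finite e
  obtain ⟨c, hc⟩ := Algebra.mem_bot.1 <|
    mem_bot_of_mem_center_of_involute_eq (nondegenerate_polarBilin he hQ) hzv_center hzv_even
  refine ⟨c, FaithfulSMul.algebraMap_injective K (CliffordAlgebra Q) ?_⟩
  calc algebraMap K _ (signedDiscriminant Q e) = z * z * (v * v) := by
        rw [hz.mul_self, one_mul, hv, volumeElement_mul_self he]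
    _ = z * v * (z * v) := by
        rw [mul_assoc, mul_assoc, ← mul_assoc v, Subring.mem_center_iff.1 hz.mem_center v,
          mul_assoc]
    _ = algebraMap K _ (c * c) := by rw [map_mul, hc]

theorem exists_isOddCentralInvolution_iff (he : Q.polarBilin.IsOrthoᵢ e)
    (hQ : ∀ i, Q (e i) ≠ 0) :
    (∃ z : CliffordAlgebra Q, IsOddCentralInvolution (involute (Q := Q)) z) ↔
      Odd n ∧ IsSquare (signedDiscriminant Q e) := by
  refine ⟨fun ⟨z, hz⟩ => ?_, fun h => exists_isOddCentralInvolution he hQ h.1 h.2⟩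
  have hn := odd_of_isOddCentralInvolution he hQ hz
  exact ⟨hn, isSquare_of_isOddCentralInvolution he hQ hn hz⟩

end Field

end VolumeElement

section WeightedSumSquares

variable {R n : Type*} [CommRing R] [Fintype n] (w : n → R)

theorem isOrthoᵢ_polarBilin_weightedSumSquares :
    (QuadraticMap.weightedSumSquares R w).polarBilin.IsOrthoᵢ (Pi.basisFun R n) := by
  classical
  intro i j hij
  refine QuadraticMap.isOrtho_polarBilin.2 (QuadraticMap.isOrtho_def.2 ?_)
  simp only [QuadraticMap.weightedSumSquares_apply, Pi.basisFun_apply, Pi.add_apply,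
    ← Finset.sum_add_distrib, ← smul_add]
  refine Finset.sum_congr rfl fun k _ => congrArg (w k • ·) ?_
  have hmul : (Pi.single i 1 : n → R) k * (Pi.single j 1 : n → R) k = 0 := by
    rw [← Pi.mul_apply, ← Pi.single_mul_left, one_mul, Pi.single_eq_of_ne hij, Pi.single_zero,
      Pi.zero_apply]
  linear_combination 2 * hmul

theorem weightedSumSquares_basisFun (i : n) :
    QuadraticMap.weightedSumSquares R w (Pi.basisFun R n i) = w i := by
  classical
  simp [QuadraticMap.weightedSumSquares_apply, Pi.single_apply]

end WeightedSumSquares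

section Signature

theorem Qpq_basisFun (p q : ℕ) (i : Fin (p + q)) :
    Qpq p q (Pi.basisFun ℝ (Fin (p + q)) i) = if (i : ℕ) < p then 1 else -1 :=
  weightedSumSquares_basisFun _ i

theorem Qpq_basisFun_ne_zero (p q : ℕ) (i : Fin (p + q)) :
    Qpq p q (Pi.basisFun ℝ (Fin (p + q)) i) ≠ 0 := by
  rw [Qpq_basisFun]; split_ifs <;> norm_num

theorem signedDiscriminant_Qpq (p q : ℕ) :
    signedDiscriminant (Qpq p q) (Pi.basisFun ℝ (Fin (p + q))) =
      (-1) ^ ((p + q).choose 2 + q) := by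
  simp only [signedDiscriminant, Qpq_basisFun, Fin.prod_univ_add, pow_add, Fin.val_castAdd,
    Fin.is_lt, Fin.val_natAdd, if_true, Nat.not_lt.2 (Nat.le_add_right _ _), if_false,
    Finset.prod_const_one, Finset.prod_const, Finset.card_univ, Fintype.card_fin, one_mul]

theorem isSquare_neg_one_pow_iff {R : Type*} [Ring R] [LinearOrder R] [IsStrictOrderedRing R]
    {k : ℕ} : IsSquare ((-1 : R) ^ k) ↔ Even k := by
  refine ⟨fun h => ?_, fun h => h.isSquare_pow _⟩
  by_contra hk
  have hneg := h.nonneg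
  rw [(Nat.not_even_iff_odd.1 hk).neg_one_pow] at hneg
  exact neg_one_lt_zero.not_ge hneg

theorem choose_two_two_mul_add_one (m : ℕ) : (2 * m + 1).choose 2 = 2 * (m * m) + m := by
  rw [Nat.choose_two_right, Nat.add_sub_cancel]
  exact Nat.div_eq_of_eq_mul_right two_pos (by ring)

theorem even_or_odd_choose_two_add_iff (p q : ℕ) :
    Even (p + q) ∨ Odd ((p + q).choose 2 + q) ↔
      ((p : ℤ) - (q : ℤ)) % 8 ∈ ({0, 2, 3, 4, 6, 7} : Set ℤ) := by
  simp only [Set.mem_insert_iff, Set.mem_singleton_iff]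
  obtain heven | ⟨m, hm⟩ := (p + q).even_or_odd
  · refine iff_of_true (.inl heven) ?_
    obtain ⟨m, hm⟩ := heven
    omega
  · rw [hm, choose_two_two_mul_add_one, Nat.even_iff, Nat.odd_iff]
    omega

end Signature

universe u v

theorem stmt10_general {K : Type u} {V : Type v} [Field K] [Invertible (2 : K)] [AddCommGroup V]
    [Module K V] {Q : QuadraticForm K V} {n : ℕ} (e : Module.Basis (Fin n) K V)
    (he : Q.polarBilin.IsOrthoᵢ e) (hQ : ∀ i, Q (e i) ≠ 0) :
    (∀ (M N : Type (max u v)) [AddCommGroup M] [Module (CliffordAlgebra Q) M]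
      [AddCommGroup N] [Module (CliffordAlgebra Q) N],
      IsSimpleModule (CliffordAlgebra Q) M → IsSimpleModule (CliffordAlgebra Q) N →
      Nonempty (M ≃ₗ[CliffordAlgebra Q] N)) ↔
    Even n ∨ ¬IsSquare (signedDiscriminant Q e) := by
  rw [← Nat.not_odd_iff_even, ← not_and_or, ← exists_isOddCentralInvolution_iff he hQ]
  constructor
  · rintro hiso ⟨z, hz⟩
    have h2 : IsUnit (2 : CliffordAlgebra Q) := by
      simpa only [map_ofNat] using
        (isUnit_of_invertible (2 : K)).map (algebraMap K (CliffordAlgebra Q))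
    obtain ⟨I, J, hI, hJ, hIJ⟩ := hz.exists_isSimpleModule_isEmpty_linearEquiv h2
    exact not_nonempty_iff.2 hIJ (hiso _ _ hI hJ)
  · intro hodd M N _ _ _ _ _ _
    have := Module.Basis.finiteDimensional_of_finite e
    have := finite_cliffordAlgebra Q
    have := IsArtinianRing.of_finite K (CliffordAlgebra Q)
    have hQ' := nondegenerate_polarBilin he hQ
    have := isSimpleRing_of_forall_le_comap involute_involutive
      (fun _ => eq_bot_or_eq_top_of_le_comap_involute hQ') hodd
    exact nonempty_linearEquiv_of_isSimpleRing M N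

/-- Any two simple modules over the Clifford algebra `Cl_{p,q}` are isomorphic if and only
if the residue of `p - q` modulo 8 lies in `{0, 2, 3, 4, 6, 7}`. -/
theorem stmt10 (p q : ℕ) :
    (∀ (M N : Type) [AddCommGroup M] [Module (CliffordAlgebra (Qpq p q)) M]
      [AddCommGroup N] [Module (CliffordAlgebra (Qpq p q)) N],
      IsSimpleModule (CliffordAlgebra (Qpq p q)) M →
      IsSimpleModule (CliffordAlgebra (Qpq p q)) N →
      Nonempty (M ≃ₗ[CliffordAlgebra (Qpq p q)] N)) ↔
    ((p : ℤ) - (q : ℤ)) % 8 ∈ ({0, 2, 3, 4, 6, 7} : Set ℤ) :=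
  (stmt10_general (Q := Qpq p q) (Pi.basisFun ℝ (Fin (p + q)))
    (isOrthoᵢ_polarBilin_weightedSumSquares _) (Qpq_basisFun_ne_zero p q)).trans <| by
    rw [signedDiscriminant_Qpq, isSquare_neg_one_pow_iff, Nat.not_even_iff_odd,
      even_or_odd_choose_two_add_iff]
end

section
/- Let 𝕜 be ℝ or ℂ and c = dim_ℝ 𝕜. Let k ∈ ℕ, let D^k denote the closed unit ball in ℝ^k and ∂D^k its boundary sphere. Let E be a 𝕜-vector bundle of rank r over D^k, let m ∈ ℕ, and let ι : ∂D^k × 𝕜^m → E|_{∂D^k} be an injective vector bundle map from the trivial rank-m bundle over ∂D^k. If r − m ≥ ⌈(k+1)/c⌉ − 1, then ι extends to an injective vector bundle map ι' : D^k × 𝕜^m → E (i.e., the restriction of ι' over ∂D^k equals ι). -/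
/-!
Over a closed set on which `E` is trivial, an injective bundle map from a trivial bundle of rank
`m` is a continuous family of linearly independent `m`-tuples in `𝕜^r`. The dependent `m`-tuples
are covered by finitely many smooth images of spaces of real dimension `c (r + 1) (m - 1)`, one
vector being a linear combination of the others, and the numerical hypothesis says that
`k + c (r + 1) (m - 1) < c r m`. Hence a generic translate of a `C¹` family over `ℝ^k` avoids them.
To extend a family, extend it by Tietze's theorem, approximate the result by a `C¹` family, make
that one avoid the dependent tuples, and interpolate between the two near the set where the
original family was given.

This local extension step adds to the domain of `ι` any closed set over which `E` is trivial, and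
by compactness finitely many such steps exhaust the base.
-/

open Bundle Metric

open Module Set Topology

theorem ceil_div_sub_one_le_sub_iff {k c r m : ℕ} (hc : 0 < c) :
    (⌈((k : ℚ) + 1) / (c : ℚ)⌉ - 1 : ℤ) ≤ (r : ℤ) - (m : ℤ) ↔ k + c * m < c * (r + 1) := by
  have hc' : (0 : ℚ) < c := by exact_mod_cast hc
  rw [sub_le_iff_le_add, Int.ceil_le, div_le_iff₀ hc', ← Nat.succ_le_iff, ← Nat.cast_le (α := ℚ)]
  push_cast
  constructor <;> intro h <;> linarith

section GeneralPosition

variable {T : Type*} [NormedAddCommGroup T] [NormedSpace ℝ T]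

theorem exists_eqOn_mapsTo_of_approx {X : Type*} [TopologicalSpace X] [NormalSpace X]
    {S K : Set X} (hS : IsClosed S) (hK : IsCompact K) {U : Set T} (hU : IsOpen U) {g : C(X, T)}
    (hg : MapsTo g S U)
    (happrox : ∀ ε > 0, ∃ g' : C(X, T), (∀ x, dist (g' x) (g x) < ε) ∧ MapsTo g' K U) :
    ∃ G : C(X, T), EqOn G g S ∧ MapsTo G K U := by
  obtain ⟨O, hO, hSO, hOU⟩ := normal_exists_closure_subset hS (hU.preimage g.continuous) hg
  obtain ⟨ψ, hψ_zero, hψ_one, hψ_mem⟩ := exists_continuous_zero_one_of_isClosed hS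
    hO.isClosed_compl (disjoint_compl_right_iff_subset.2 hSO)
  obtain ⟨ε, hε, hεU⟩ := ((hK.inter_right isClosed_closure).image g.continuous)
    |>.exists_thickening_subset_open hU (image_subset_iff.2 fun x hx => hOU hx.2)
  obtain ⟨g', hg'_dist, hg'_mem⟩ := happrox ε hε
  refine ⟨⟨fun x => AffineMap.lineMap (g x) (g' x) (ψ x), by fun_prop⟩, fun x hx => ?_,
    fun x hx => ?_⟩
  · simp [hψ_zero hx]
  · by_cases hxO : x ∈ O
    · refine hεU (mem_thickening_iff.2 ⟨g x, ⟨x, ⟨hx, subset_closure hxO⟩, rfl⟩, ?_⟩)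
      calc dist (AffineMap.lineMap (g x) (g' x) (ψ x)) (g x)
          = ψ x * dist (g' x) (g x) := by
            rw [dist_lineMap_left, Real.norm_of_nonneg (hψ_mem x).1, dist_comm]
        _ ≤ dist (g' x) (g x) := mul_le_of_le_one_left dist_nonneg (hψ_mem x).2
        _ < ε := hg'_dist x
    · simpa [hψ_one hxO] using hg'_mem hx

variable [FiniteDimensional ℝ T] {V W : Type*} [NormedAddCommGroup V] [NormedSpace ℝ V]
  [FiniteDimensional ℝ V] [NormedAddCommGroup W] [NormedSpace ℝ W] [FiniteDimensional ℝ W]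
  {ι : Type*} [Countable ι] {Ψ : ι → W → T}

theorem dense_setOf_forall_add_notMem_iUnion_range (hΨ : ∀ i, ContDiff ℝ 1 (Ψ i)) {h : V → T}
    (hh : ContDiff ℝ 1 h) (hdim : finrank ℝ V + finrank ℝ W < finrank ℝ T) :
    Dense {a | ∀ x, h x + a ∉ ⋃ i, range (Ψ i)} := by
  let Φ : ι → V × W → T := fun i p => Ψ i p.2 - h p.1
  have hΦ (i : ι) : ContDiff ℝ 1 (Φ i) :=
    ((hΨ i).comp contDiff_snd).sub (hh.comp contDiff_fst)
  have hΦ_dim : dimH (⋃ i, range (Φ i)) < finrank ℝ T := by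
    rw [dimH_iUnion]
    refine (iSup_le fun i => (hΦ i).dimH_range_le).trans_lt ?_
    rw [finrank_prod]
    exact_mod_cast hdim
  refine (dense_compl_of_dimH_lt_finrank hΦ_dim).mono fun a (ha : a ∉ _) x hx => ha ?_
  obtain ⟨i, w, hw⟩ := mem_iUnion.1 hx
  exact mem_iUnion.2 ⟨i, (x, w), sub_eq_of_eq_add' hw⟩

theorem exists_continuousMap_dist_lt_forall_mem {U : Set T}
    (hU : Uᶜ ⊆ ⋃ i, range (Ψ i)) (hΨ : ∀ i, ContDiff ℝ 1 (Ψ i))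
    (hdim : finrank ℝ V + finrank ℝ W < finrank ℝ T) (g : C(V, T)) {ε : ℝ} (hε : 0 < ε) :
    ∃ g' : C(V, T), (∀ x, dist (g' x) (g x) < ε) ∧ ∀ x, g' x ∈ U := by
  obtain ⟨h, hh, hh_dist, -⟩ := g.continuous.exists_contDiff_approx 1
    (ε := fun _ => ε / 2) continuous_const fun _ => half_pos hε
  obtain ⟨a, ha, ha_dist⟩ := (dense_setOf_forall_add_notMem_iUnion_range hΨ hh hdim).exists_dist_lt
    0 (half_pos hε)
  refine ⟨⟨fun x => h x + a, hh.continuous.add_const a⟩, fun x => ?_,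
    fun x => by_contra fun hx => ha x (hU hx)⟩
  calc dist (h x + a) (g x) ≤ dist (h x + a) (h x) + dist (h x) (g x) := dist_triangle _ _ _
    _ < ε / 2 + ε / 2 := by
      gcongr
      · simpa using ha_dist
      · exact hh_dist x
    _ = ε := add_halves ε

theorem exists_extension_mapsTo_of_compl_subset_iUnion_range {X : Type*} [TopologicalSpace X]
    {e : X → V} (he : IsClosedEmbedding e) {K : Set V} (hK : IsCompact K) {U : Set T}
    (hU_open : IsOpen U) (hU : Uᶜ ⊆ ⋃ i, range (Ψ i)) (hΨ : ∀ i, ContDiff ℝ 1 (Ψ i))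
    (hdim : finrank ℝ V + finrank ℝ W < finrank ℝ T) {f : C(X, T)} (hf : ∀ x, f x ∈ U) :
    ∃ G : C(V, T), (∀ x, G (e x) = f x) ∧ MapsTo G K U := by
  have : TietzeExtension T := RCLike.instTietzeExtensionTVS (𝕜 := ℝ)
  obtain ⟨g, hg⟩ := f.exists_extension' he
  have hg_apply (x : X) : g (e x) = f x := congrFun hg x
  obtain ⟨G, hG_eq, hG_mem⟩ := exists_eqOn_mapsTo_of_approx he.isClosed_range hK hU_open
    (forall_mem_range.2 fun x => (hg_apply x).symm ▸ hf x) fun ε hε => by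
      obtain ⟨g', hg'_dist, hg'_mem⟩ := exists_continuousMap_dist_lt_forall_mem hU hΨ hdim g hε
      exact ⟨g', hg'_dist, fun x _ => hg'_mem x⟩
  exact ⟨G, fun x => (hG_eq (mem_range_self x)).trans (hg_apply x), hG_mem⟩

end GeneralPosition

section LinearIndependent

/-- The `(n + 1)`-tuple whose vectors other than the `i`-th are `p.1` and whose `i`-th vector is the
linear combination of these with coefficients `p.2`. These maps parametrize the linearly dependent
tuples. -/
def insertNthCombination {𝕜 F : Type*} [Semiring 𝕜] [AddCommMonoid F] [Module 𝕜 F] {n : ℕ}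
    (i : Fin (n + 1)) (p : (Fin n → F) × (Fin n → 𝕜)) : Fin (n + 1) → F :=
  i.insertNth (∑ j, p.2 j • p.1 j) p.1

theorem compl_setOf_linearIndependent_subset_iUnion_range {𝕜 F : Type*} [DivisionRing 𝕜]
    [AddCommGroup F] [Module 𝕜 F] {n : ℕ} :
    {v : Fin (n + 1) → F | LinearIndependent 𝕜 v}ᶜ ⊆
      ⋃ i, range (insertNthCombination (𝕜 := 𝕜) i) := by
  intro v hv
  obtain ⟨i, hi⟩ : ∃ i, v i ∈ Submodule.span 𝕜 (v '' (univ \ {i})) := by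
    simpa [linearIndependent_iff_notMem_span] using hv
  rw [← compl_eq_univ_sdiff, ← Fin.range_succAbove, ← range_comp,
    Submodule.mem_span_range_iff_exists_fun] at hi
  obtain ⟨a, ha⟩ := hi
  refine mem_iUnion.2 ⟨i, (i.removeNth v, a), ?_⟩
  exact (congrArg (i.insertNth · (i.removeNth v)) ha).trans (Fin.insertNth_self_removeNth i v)

variable {𝕜 F V : Type*} [RCLike 𝕜] [NormedAddCommGroup F] [NormedSpace 𝕜 F]

theorem contDiff_insertNthCombination [NormedSpace ℝ F] [IsScalarTower ℝ 𝕜 F] {n : ℕ}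
    (i : Fin (n + 1)) :
    ContDiff ℝ 1 (insertNthCombination (𝕜 := 𝕜) (F := F) i) := by
  refine contDiff_pi.2 (i.succAboveCases ?_ fun j => ?_)
  · simp only [insertNthCombination, Fin.insertNth_apply_same]
    fun_prop
  · simp only [insertNthCombination, Fin.insertNth_apply_succAbove]
    fun_prop

variable [FiniteDimensional 𝕜 F] [NormedAddCommGroup V] [NormedSpace ℝ V] [FiniteDimensional ℝ V]
  {X : Type*} [TopologicalSpace X] {e : X → V} {K : Set V}

theorem exists_extension_linearIndependent {m : ℕ} (he : IsClosedEmbedding e) (hK : IsCompact K)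
    (hdim : finrank ℝ V + finrank ℝ 𝕜 * m < finrank ℝ 𝕜 * (finrank 𝕜 F + 1))
    {f : C(X, Fin m → F)} (hf : ∀ x, LinearIndependent 𝕜 (f x)) :
    ∃ G : C(V, Fin m → F), (∀ x, G (e x) = f x) ∧ ∀ y ∈ K, LinearIndependent 𝕜 (G y) := by
  let : NormedSpace ℝ F := NormedSpace.restrictScalars ℝ 𝕜 F
  have : IsScalarTower ℝ 𝕜 F := .of_algebraMap_smul fun _ _ => rfl
  have : FiniteDimensional ℝ F := .trans ℝ 𝕜 F
  rcases m with _ | n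
  · exact ⟨0, fun _ => Subsingleton.elim _ _, fun _ _ => linearIndependent_empty_type⟩
  refine exists_extension_mapsTo_of_compl_subset_iUnion_range he hK
    isOpen_setOfPred_linearIndependent compl_setOf_linearIndependent_subset_iUnion_range
    (contDiff_insertNthCombination (𝕜 := 𝕜)) ?_ hf
  simp only [finrank_prod, finrank_pi_fintype, Finset.sum_const, Finset.card_univ,
    Fintype.card_fin, smul_eq_mul, ← finrank_mul_finrank ℝ 𝕜 F]
  linarith

theorem exists_extension_injective {M : Type*} [NormedAddCommGroup M] [NormedSpace 𝕜 M]
    [FiniteDimensional 𝕜 M] (he : IsClosedEmbedding e) (hK : IsCompact K)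
    (hdim : finrank ℝ V + finrank ℝ 𝕜 * finrank 𝕜 M < finrank ℝ 𝕜 * (finrank 𝕜 F + 1))
    {A : X → M →ₗ[𝕜] F} (hA : Continuous fun p : X × M => A p.1 p.2)
    (hA_inj : ∀ x, Function.Injective (A x)) :
    ∃ A' : V → M →ₗ[𝕜] F, (Continuous fun p : V × M => A' p.1 p.2) ∧
      (∀ x, A' (e x) = A x) ∧ ∀ y ∈ K, Function.Injective (A' y) := by
  let b := finBasis 𝕜 M
  obtain ⟨G, hG_eq, hG_indep⟩ := exists_extension_linearIndependent he hK hdim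
    (f := ⟨fun x j => A x (b j), by fun_prop⟩)
    fun x => b.linearIndependent.map' (A x) (LinearMap.ker_eq_bot.2 (hA_inj x))
  refine ⟨fun y => Fintype.linearCombination 𝕜 (G y) ∘ₗ b.equivFun, ?_, fun x => ?_,
    fun y hy => ?_⟩
  · have hb : Continuous b.equivFun := b.equivFun.toLinearMap.continuous_of_finiteDimensional
    simp only [LinearMap.comp_apply, LinearEquiv.coe_coe, Fintype.linearCombination_apply]
    fun_prop
  · refine b.ext fun j => ?_
    simp [hG_eq, Fintype.linearCombination_apply, Finsupp.single_apply]
  · exact (linearIndependent_iff_injective_fintypeLinearCombination.1 (hG_indep y hy)).comp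
      b.equivFun.injective

end LinearIndependent

section InjectiveBundleMap

variable {R B F M : Type*} [Semiring R] [TopologicalSpace B] {E : B → Type*}
  [∀ x, AddCommMonoid (E x)] [∀ x, Module R (E x)] [TopologicalSpace (TotalSpace F E)]
  [AddCommMonoid M] [Module R M] [TopologicalSpace M]

/-- The restriction to `S` of the fiberwise linear map `ι` is an injective vector bundle map from
the trivial bundle `S × M` into `E|_S`. Nothing is required of `ι x` for `x ∉ S`. -/
structure IsInjectiveBundleMapOn (F : Type*) [TopologicalSpace (TotalSpace F E)]
    (ι : ∀ x, M →ₗ[R] E x) (S : Set B) : Prop where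
  continuousOn : ContinuousOn (fun p : B × M => TotalSpace.mk' F p.1 (ι p.1 p.2)) (Prod.fst ⁻¹' S)
  injective : ∀ x ∈ S, Function.Injective (ι x)

namespace IsInjectiveBundleMapOn

variable {ι ι' : ∀ x, M →ₗ[R] E x} {S C : Set B}

theorem congr (hι : IsInjectiveBundleMapOn F ι S) (heq : ∀ x ∈ S, ι' x = ι x) :
    IsInjectiveBundleMapOn F ι' S where
  continuousOn := hι.continuousOn.congr fun p hp => by rw [heq p.1 hp]
  injective x hx := heq x hx ▸ hι.injective x hx

theorem mono (hι : IsInjectiveBundleMapOn F ι S) (hCS : C ⊆ S) : IsInjectiveBundleMapOn F ι C where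
  continuousOn := hι.continuousOn.mono (preimage_mono hCS)
  injective x hx := hι.injective x (hCS hx)

theorem union (hS : IsInjectiveBundleMapOn F ι S) (hC : IsInjectiveBundleMapOn F ι C)
    (hS_closed : IsClosed S) (hC_closed : IsClosed C) : IsInjectiveBundleMapOn F ι (S ∪ C) where
  continuousOn := hS.continuousOn.union_of_isClosed hC.continuousOn
    (hS_closed.preimage continuous_fst) (hC_closed.preimage continuous_fst)
  injective x := Or.rec (hS.injective x) (hC.injective x)

theorem piecewise [∀ x, Decidable (x ∈ S)] (hι : IsInjectiveBundleMapOn F ι S)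
    (hι' : IsInjectiveBundleMapOn F ι' C) (hS : IsClosed S) (hC : IsClosed C)
    (heq : ∀ x ∈ S ∩ C, ι x = ι' x) : IsInjectiveBundleMapOn F (S.piecewise ι ι') (S ∪ C) := by
  refine (hι.congr fun x hx => piecewise_eq_of_mem S ι ι' hx).union
    (hι'.congr fun x hx => ?_) hS hC
  by_cases hxS : x ∈ S
  · exact (piecewise_eq_of_mem S ι ι' hxS).trans (heq x ⟨hxS, hx⟩)
  · exact piecewise_eq_of_notMem S ι ι' hxS

variable [TopologicalSpace F] [AddCommMonoid F] [Module R F] {e : Trivialization F (π F E)}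
  [e.IsLinear R]

theorem continuousOn_linearMapAt (hι : IsInjectiveBundleMapOn F ι S) (hS : S ⊆ e.baseSet) :
    ContinuousOn (fun p : B × M => e.linearMapAt R p.1 (ι p.1 p.2)) (Prod.fst ⁻¹' S) := by
  refine (continuous_snd.comp_continuousOn (e.continuousOn.comp hι.continuousOn
    fun p hp => e.mem_source.2 (hS hp))).congr fun p hp => ?_
  simp [e.coe_linearMapAt_of_mem (hS hp)]

theorem of_trivialization {A : B → M →ₗ[R] F} (hS : S ⊆ e.baseSet)
    (hA : ContinuousOn (fun p : B × M => A p.1 p.2) (Prod.fst ⁻¹' S))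
    (hA_inj : ∀ x ∈ S, Function.Injective (A x)) :
    IsInjectiveBundleMapOn F (fun x => e.symmₗ R x ∘ₗ A x) S where
  continuousOn := (e.continuousOn_symm.comp (continuousOn_fst.prodMk hA)
    fun p hp => ⟨hS hp, mem_univ _⟩).congr fun p hp => by simp [e.coe_symmₗ (hS hp)]
  injective x hx := (Function.LeftInverse.injective (e.linearMapAt_symmₗ (hS hx))).comp
    (hA_inj x hx)

end IsInjectiveBundleMapOn

end InjectiveBundleMap

section Extension

variable {𝕜 B F M V : Type*} [RCLike 𝕜] [TopologicalSpace B] [NormedAddCommGroup F]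
  [NormedSpace 𝕜 F] [FiniteDimensional 𝕜 F] {E : B → Type*} [∀ x, AddCommGroup (E x)]
  [∀ x, Module 𝕜 (E x)] [TopologicalSpace (TotalSpace F E)] [NormedAddCommGroup M]
  [NormedSpace 𝕜 M] [FiniteDimensional 𝕜 M] [NormedAddCommGroup V] [NormedSpace ℝ V]
  [FiniteDimensional ℝ V] {φ : B → V} {ι : ∀ x, M →ₗ[𝕜] E x} {S : Set B}

theorem IsInjectiveBundleMapOn.exists_extension_union_of_subset_baseSet
    {e : Trivialization F (π F E)} [e.IsLinear 𝕜] {C : Set B}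
    (hι : IsInjectiveBundleMapOn F ι S) (hS : IsClosed S) (hC : IsCompact C)
    (hCe : C ⊆ e.baseSet) (hφ : IsClosedEmbedding φ)
    (hdim : finrank ℝ V + finrank ℝ 𝕜 * finrank 𝕜 M < finrank ℝ 𝕜 * (finrank 𝕜 F + 1)) :
    ∃ ι' : ∀ x, M →ₗ[𝕜] E x, IsInjectiveBundleMapOn F ι' (S ∪ C) ∧ ∀ x ∈ S, ι' x = ι x := by
  classical
  have : T2Space B := hφ.isEmbedding.t2Space
  have hSC : IsClosed (S ∩ C) := hS.inter hC.isClosed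
  have hSC_e : S ∩ C ⊆ e.baseSet := inter_subset_right.trans hCe
  let A : ↥(S ∩ C) → M →ₗ[𝕜] F := fun x => e.linearMapAt 𝕜 (x : B) ∘ₗ ι x
  have hA : Continuous fun p : ↥(S ∩ C) × M => A p.1 p.2 :=
    ((hι.mono inter_subset_left).continuousOn_linearMapAt hSC_e).comp_continuous
      (f := fun p : ↥(S ∩ C) × M => ((p.1 : B), p.2)) (by fun_prop) fun p => p.1.2
  have hA_inj (x : ↥(S ∩ C)) : Function.Injective (A x) :=
    (Function.LeftInverse.injective (e.symmₗ_linearMapAt (hSC_e x.2))).comp (hι.injective x x.2.1)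
  obtain ⟨A', hA', hA'_eq, hA'_inj⟩ := exists_extension_injective
    (hφ.comp hSC.isClosedEmbedding_subtypeVal) (hC.image hφ.continuous) hdim hA hA_inj
  let ιC : ∀ x, M →ₗ[𝕜] E x := fun x => e.symmₗ 𝕜 x ∘ₗ A' (φ x)
  have hιC : IsInjectiveBundleMapOn F ιC C :=
    .of_trivialization hCe
      (hA'.comp ((hφ.continuous.comp continuous_fst).prodMk continuous_snd)).continuousOn
      fun x hx => hA'_inj _ (mem_image_of_mem φ hx)
  have heq (x : B) (hx : x ∈ S ∩ C) : ι x = ιC x := LinearMap.ext fun v => by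
    have hA'v : A' (φ x) v = e.linearMapAt 𝕜 x (ι x v) := LinearMap.congr_fun (hA'_eq ⟨x, hx⟩) v
    simp only [ιC, LinearMap.comp_apply, hA'v, e.symmₗ_linearMapAt (hSC_e hx)]
  exact ⟨S.piecewise ι ιC, hι.piecewise hιC hS hC.isClosed heq,
    fun x hx => piecewise_eq_of_mem S ι ιC hx⟩

theorem stmt12_general [CompactSpace B] [∀ x, TopologicalSpace (E x)] [FiberBundle F E]
    [VectorBundle 𝕜 F E] (hφ : IsClosedEmbedding φ) (hS : IsClosed S)
    (hι : IsInjectiveBundleMapOn F ι S)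
    (hdim : finrank ℝ V + finrank ℝ 𝕜 * finrank 𝕜 M < finrank ℝ 𝕜 * (finrank 𝕜 F + 1)) :
    ∃ ι' : ∀ x, M →ₗ[𝕜] E x, IsInjectiveBundleMapOn F ι' univ ∧ ∀ x ∈ S, ι' x = ι x := by
  have : T2Space B := hφ.isEmbedding.t2Space
  let ExtendsOver (C : Set B) : Prop := ∀ (S : Set B) (ι : ∀ x, M →ₗ[𝕜] E x), IsClosed S →
    IsInjectiveBundleMapOn F ι S → ∃ S' ι', IsClosed S' ∧ S ∪ C ⊆ S' ∧
      IsInjectiveBundleMapOn F ι' S' ∧ ∀ x ∈ S, ι' x = ι x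
  have extendsOver_univ : ExtendsOver univ := by
    refine isCompact_univ.induction_on ?_ ?_ ?_ fun x _ => ?_
    · exact fun S ι hS hι => ⟨S, ι, hS, by simp, hι, fun _ _ => rfl⟩
    · intro C D hCD hD S ι hS hι
      obtain ⟨S', ι', hS', hsub, hι', heq⟩ := hD S ι hS hι
      exact ⟨S', ι', hS', (union_subset_union_right S hCD).trans hsub, hι', heq⟩
    · intro C D hC hD S ι hS hι
      obtain ⟨S₁, ι₁, hS₁, hsub₁, hι₁, heq₁⟩ := hC S ι hS hι
      obtain ⟨S₂, ι₂, hS₂, hsub₂, hι₂, heq₂⟩ := hD S₁ ι₁ hS₁ hι₁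
      refine ⟨S₂, ι₂, hS₂, ?_, hι₂, fun x hx => ?_⟩
      · rw [← union_assoc]
        exact (union_subset_union_left D hsub₁).trans hsub₂
      · rw [heq₂ x (hsub₁ (Or.inl hx)), heq₁ x hx]
    · obtain ⟨C, hCx, hC, hCe⟩ := exists_mem_nhds_isClosed_subset
        ((trivializationAt F E x).open_baseSet.mem_nhds (mem_baseSet_trivializationAt F E x))
      refine ⟨C, mem_nhdsWithin_of_mem_nhds hCx, fun S ι hS hι => ?_⟩
      obtain ⟨ι', hι', heq⟩ :=
        hι.exists_extension_union_of_subset_baseSet hS hC.isCompact hCe hφ hdim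
      exact ⟨S ∪ C, ι', hS.union hC, Subset.rfl, hι', heq⟩
  obtain ⟨S', ι', -, hsub, hι', heq⟩ := extendsOver_univ S ι hS hι
  exact ⟨ι', hι'.mono (subset_union_right.trans hsub), heq⟩

end Extension

/-- Let `𝕜` be `ℝ` or `ℂ` and let `c = dim_ℝ 𝕜`.  Let `D^k` be the closed unit ball in
`ℝ^k` and `∂D^k` its boundary sphere.  Let `E` be a `𝕜`-vector bundle of rank `r` over
`D^k` and let `ι` be an injective vector bundle map from the trivial bundle
`∂D^k × 𝕜^m` into `E|_{∂D^k}`.  If `r - m ≥ ⌈(k+1)/c⌉ - 1`, then `ι` extends to an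
injective vector bundle map `ι' : D^k × 𝕜^m → E`. -/
theorem stmt12 (𝕜 : Type) [RCLike 𝕜] (k r m : ℕ)
    (E : (closedBall (0 : EuclideanSpace ℝ (Fin k)) 1) → Type)
    [∀ x, AddCommGroup (E x)] [∀ x, Module 𝕜 (E x)] [∀ x, TopologicalSpace (E x)]
    [TopologicalSpace (TotalSpace (Fin r → 𝕜) E)]
    [FiberBundle (Fin r → 𝕜) E] [VectorBundle 𝕜 (Fin r → 𝕜) E]
    (ι : ∀ x : closedBall (0 : EuclideanSpace ℝ (Fin k)) 1, (Fin m → 𝕜) →ₗ[𝕜] E x)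
    (hι_cont : ContinuousOn
      (fun p : (closedBall (0 : EuclideanSpace ℝ (Fin k)) 1) × (Fin m → 𝕜) =>
        TotalSpace.mk' (Fin r → 𝕜) p.1 (ι p.1 p.2))
      {p | (p.1 : EuclideanSpace ℝ (Fin k)) ∈ sphere 0 1})
    (hι_inj : ∀ x : closedBall (0 : EuclideanSpace ℝ (Fin k)) 1,
      (x : EuclideanSpace ℝ (Fin k)) ∈ sphere 0 1 → Function.Injective (ι x))
    (h : (⌈((k : ℚ) + 1) / (Module.finrank ℝ 𝕜 : ℚ)⌉ - 1 : ℤ) ≤ (r : ℤ) - (m : ℤ)) :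
    ∃ ι' : ∀ x : closedBall (0 : EuclideanSpace ℝ (Fin k)) 1, (Fin m → 𝕜) →ₗ[𝕜] E x,
      Continuous (fun p : (closedBall (0 : EuclideanSpace ℝ (Fin k)) 1) × (Fin m → 𝕜) =>
        TotalSpace.mk' (Fin r → 𝕜) p.1 (ι' p.1 p.2)) ∧
      (∀ x, Function.Injective (ι' x)) ∧
      (∀ x : closedBall (0 : EuclideanSpace ℝ (Fin k)) 1,
        (x : EuclideanSpace ℝ (Fin k)) ∈ sphere 0 1 → ι' x = ι x) := by
  obtain ⟨ι', hι', heq⟩ := stmt12_general isClosed_closedBall.isClosedEmbedding_subtypeVal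
    (isClosed_sphere.preimage continuous_subtype_val) ⟨hι_cont, hι_inj⟩
    (by simpa using (ceil_div_sub_one_le_sub_iff finrank_pos).1 h)
  exact ⟨ι', continuousOn_univ.1 hι'.continuousOn, fun x => hι'.injective x trivial, heq⟩
end

section
/- Let 𝕜 be ℝ or ℂ and let X be a topological space. Let L and L' be 𝕜-vector bundles of rank 1 over X, and let V be a 𝕜-vector bundle of rank n over X. If there is a vector bundle isomorphism L ⊕ V ≅ L' ⊕ V, then there is a vector bundle isomorphism L ≅ L'. (This is the case of trivial symmetry group of the statement that stably isomorphic equivariant real or complex line bundles are isomorphic.) -/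
open Bundle

/-!
Taking top exterior powers turns `L ⊕ V ≅ L' ⊕ V` into `L ⊗ det V ≅ L' ⊗ det V`, and the line
bundle `det V` can be cancelled. Without exterior powers, the resulting map `Lₓ → L'ₓ` is
`det ((s ⊕ id) ∘ φₓ) • s⁻¹` for an arbitrary isomorphism `s : L'ₓ ≃ Lₓ`: replacing `s` by `c • s`
multiplies the determinant by `c` and `s⁻¹` by `c⁻¹`. Hence `s` may be chosen differently at each
point, with no continuity: in any local trivializations the map is multiplication by the
determinant of the matrix of `φ`, which is continuous.
-/

section Fiber

variable {K L L' V : Type*} [CommRing K] [AddCommGroup L] [Module K L] [AddCommGroup L']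
  [Module K L'] [AddCommGroup V] [Module K V]

/-- The isomorphism `det ((s ⊕ id) ∘ φ) • s⁻¹ : L ≃ L'` obtained from `φ : L ⊕ V ≃ L' ⊕ V` by
cancelling the determinant of `V`. It is meant for `L` and `L'` free of rank one, where the
auxiliary isomorphism `s` does not affect the result. -/
noncomputable def detCancel (φ : (L × V) ≃ₗ[K] (L' × V)) (s : L' ≃ₗ[K] L) : L ≃ₗ[K] L' :=
  s.symm ≪≫ₗ LinearEquiv.smulOfUnit
    (LinearEquiv.det (φ ≪≫ₗ s.prodCongr (LinearEquiv.refl K V)))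

theorem detCancel_apply (φ : (L × V) ≃ₗ[K] (L' × V)) (s : L' ≃ₗ[K] L) (l : L) :
    detCancel φ s l =
      LinearMap.det (φ ≪≫ₗ s.prodCongr (LinearEquiv.refl K V) : L × V →ₗ[K] L × V) • s.symm l := by
  rw [← LinearEquiv.coe_det]
  rfl

theorem det_trans_prodCongr_refl {F : Type*} [AddCommGroup F] [Module K F] [Module.Free K F]
    [Module.Finite K F] (φ : (L × V) ≃ₗ[K] (L' × V)) (s : L' ≃ₗ[K] L)
    (e : L ≃ₗ[K] K) (e' : L' ≃ₗ[K] K) (f : V ≃ₗ[K] F) :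
    LinearMap.det (φ ≪≫ₗ s.prodCongr (LinearEquiv.refl K V) : L × V →ₗ[K] L × V) =
      e (s (e'.symm 1)) * LinearMap.det
        ((e.prodCongr f).symm ≪≫ₗ φ ≪≫ₗ e'.prodCongr f : K × F →ₗ[K] K × F) := by
  have factor : (e.prodCongr f : L × V →ₗ[K] K × F) ∘ₗ
      (φ ≪≫ₗ s.prodCongr (LinearEquiv.refl K V) : L × V →ₗ[K] L × V) ∘ₗ
        ((e.prodCongr f).symm : K × F →ₗ[K] L × V) =
      (e'.symm ≪≫ₗ s ≪≫ₗ e : K →ₗ[K] K).prodMap LinearMap.id ∘ₗ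
        ((e.prodCongr f).symm ≪≫ₗ φ ≪≫ₗ e'.prodCongr f : K × F →ₗ[K] K × F) :=
    LinearMap.ext fun p => by simp
  rw [← LinearMap.det_conj _ (e.prodCongr f), factor, LinearMap.det_comp, LinearMap.det_prodMap,
    LinearMap.det_id, mul_one, LinearMap.det_ring]
  rfl

theorem apply_detCancel {F : Type*} [AddCommGroup F] [Module K F] [Module.Free K F]
    [Module.Finite K F] (φ : (L × V) ≃ₗ[K] (L' × V)) (s : L' ≃ₗ[K] L)
    (e : L ≃ₗ[K] K) (e' : L' ≃ₗ[K] K) (f : V ≃ₗ[K] F) (l : L) :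
    e' (detCancel φ s l) =
      LinearMap.det ((e.prodCongr f).symm ≪≫ₗ φ ≪≫ₗ e'.prodCongr f : K × F →ₗ[K] K × F) * e l := by
  have s_eq_smul (y : L') : e (s y) = e' y * e (s (e'.symm 1)) := by
    rw [← smul_eq_mul, ← map_smul, ← map_smul, ← map_smul, smul_eq_mul, mul_one,
      e'.symm_apply_apply]
  have hl : e l = e' (s.symm l) * e (s (e'.symm 1)) := by rw [← s_eq_smul, s.apply_symm_apply]
  rw [detCancel_apply, map_smul, det_trans_prodCongr_refl φ s e e' f, hl, smul_eq_mul]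
  ring

end Fiber

section FiberwiseEquiv

variable {𝕜 X F F' : Type*} [NontriviallyNormedField 𝕜] [TopologicalSpace X]
  [NormedAddCommGroup F] [NormedSpace 𝕜 F]
  {E E' : X → Type*} [∀ x, AddCommGroup (E x)] [∀ x, Module 𝕜 (E x)]
  [∀ x, AddCommGroup (E' x)] [∀ x, Module 𝕜 (E' x)] [TopologicalSpace (TotalSpace F E)]

theorem linearEquivAt_prod [NormedAddCommGroup F'] [NormedSpace 𝕜 F']
    [TopologicalSpace (TotalSpace F' E')] (e : Trivialization F (π F E))
    (e' : Trivialization F' (π F' E')) [e.IsLinear 𝕜] [e'.IsLinear 𝕜] {x : X}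
    (hx : x ∈ e.baseSet) (hx' : x ∈ e'.baseSet) :
    (e.prod e').linearEquivAt 𝕜 x ⟨hx, hx'⟩ =
      (e.linearEquivAt 𝕜 x hx).prodCongr (e'.linearEquivAt 𝕜 x hx') :=
  LinearEquiv.ext fun _ => rfl

variable (𝕜 F E E') in
theorem nonempty_fiber_linearEquiv [TopologicalSpace (TotalSpace F E')]
    [∀ x, TopologicalSpace (E x)] [FiberBundle F E] [VectorBundle 𝕜 F E]
    [∀ x, TopologicalSpace (E' x)] [FiberBundle F E'] [VectorBundle 𝕜 F E'] (x : X) :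
    Nonempty (E x ≃ₗ[𝕜] E' x) :=
  ⟨(trivializationAt F E x).linearEquivAt 𝕜 x (FiberBundle.mem_baseSet_trivializationAt F E x) ≪≫ₗ
    ((trivializationAt F E' x).linearEquivAt 𝕜 x
      (FiberBundle.mem_baseSet_trivializationAt F E' x)).symm⟩

end FiberwiseEquiv

section Coordinates

variable {𝕜 X F F' : Type*} [NontriviallyNormedField 𝕜] [CompleteSpace 𝕜] [TopologicalSpace X]
  [NormedAddCommGroup F] [NormedSpace 𝕜 F] [FiniteDimensional 𝕜 F]
  [NormedAddCommGroup F'] [NormedSpace 𝕜 F']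
  {E E' : X → Type*} [∀ x, AddCommGroup (E x)] [∀ x, Module 𝕜 (E x)]
  [∀ x, AddCommGroup (E' x)] [∀ x, Module 𝕜 (E' x)]
  [TopologicalSpace (TotalSpace F E)] [TopologicalSpace (TotalSpace F' E')]

section Trivialization

variable (e : Trivialization F (π F E)) (e' : Trivialization F' (π F' E'))
  [e.IsLinear 𝕜] [e'.IsLinear 𝕜] {x : X}

variable (𝕜) in
/-- The fiberwise linear map `φ` read in the trivializations `e` and `e'`, as a family of
continuous linear maps between the model fibers. As for `ContinuousLinearMap.inCoordinates`, the
value is `0` outside the base sets; unlike there, the maps `φ x` need not be continuous. -/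
noncomputable def coordMap (φ : ∀ x, E x →ₗ[𝕜] E' x) (x : X) : F →L[𝕜] F' :=
  LinearMap.toContinuousLinearMap (e'.linearMapAt 𝕜 x ∘ₗ φ x ∘ₗ e.symmₗ 𝕜 x)

theorem coordMap_apply (φ : ∀ x, E x →ₗ[𝕜] E' x) (hx : x ∈ e.baseSet) (hx' : x ∈ e'.baseSet)
    (v : F) : coordMap 𝕜 e e' φ x v = (e' ⟨x, φ x (e.symm x v)⟩).2 := by
  simp [coordMap, e.symmₗ_apply hx, e'.coe_linearMapAt_of_mem hx']

theorem coordMap_apply_snd (φ : ∀ x, E x →ₗ[𝕜] E' x) (hx : x ∈ e.baseSet)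
    (hx' : x ∈ e'.baseSet) (y : E x) :
    coordMap 𝕜 e e' φ x (e ⟨x, y⟩).2 = (e' ⟨x, φ x y⟩).2 := by
  rw [coordMap_apply e e' φ hx hx', e.symm_apply_apply_mk hx]

theorem coordMap_eq_coe_linearEquiv (φ : ∀ x, E x ≃ₗ[𝕜] E' x) (hx : x ∈ e.baseSet)
    (hx' : x ∈ e'.baseSet) :
    coordMap 𝕜 e e' (fun x => φ x) x = ((e.linearEquivAt 𝕜 x hx).symm ≪≫ₗ φ x ≪≫ₗ
      e'.linearEquivAt 𝕜 x hx').toContinuousLinearEquiv :=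
  ContinuousLinearMap.ext fun v => coordMap_apply e e' _ hx hx' v

theorem coordMap_symm [FiniteDimensional 𝕜 F'] (φ : ∀ x, E x ≃ₗ[𝕜] E' x)
    (hx : x ∈ e.baseSet) (hx' : x ∈ e'.baseSet) :
    coordMap 𝕜 e' e (fun x => (φ x).symm) x = (coordMap 𝕜 e e' (fun x => φ x) x).inverse := by
  rw [coordMap_eq_coe_linearEquiv e' e (fun x => (φ x).symm) hx' hx,
    coordMap_eq_coe_linearEquiv e e' φ hx hx', ContinuousLinearMap.inverse_equiv]
  rfl

theorem continuousAt_coordMap {φ : ∀ x, E x →ₗ[𝕜] E' x}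
    (hφ : Continuous fun p : TotalSpace F E => TotalSpace.mk' F' p.1 (φ p.1 p.2))
    (hx : x ∈ e.baseSet) (hx' : x ∈ e'.baseSet) : ContinuousAt (coordMap 𝕜 e e' φ) x := by
  refine continuousAt_clm_apply.2 fun v => ?_
  have hsymm : ContinuousAt (fun y => TotalSpace.mk' F y (e.symm y v)) x :=
    (e.continuousOn_symm.comp (f := fun y => (y, v)) (by fun_prop)
      fun y hy => ⟨hy, Set.mem_univ v⟩).continuousAt (e.open_baseSet.mem_nhds hx)
  have hcoord : ContinuousAt (fun y => (e' ⟨y, φ y (e.symm y v)⟩).2) x :=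
    ((e'.continuousAt (e'.mem_source.2 hx')).comp (hφ.continuousAt.comp hsymm)).snd
  refine hcoord.congr ?_
  filter_upwards [e.open_baseSet.mem_nhds hx, e'.open_baseSet.mem_nhds hx'] with y hy hy'
  exact (coordMap_apply e e' φ hy hy' v).symm

end Trivialization

variable [∀ x, TopologicalSpace (E x)] [∀ x, TopologicalSpace (E' x)] [FiberBundle F E]
  [FiberBundle F' E'] [VectorBundle 𝕜 F E] [VectorBundle 𝕜 F' E']

theorem continuous_of_continuousAt_coordMap {φ : ∀ x, E x →ₗ[𝕜] E' x}
    (hφ : ∀ x, ContinuousAt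
      (coordMap 𝕜 (trivializationAt F E x) (trivializationAt F' E' x) φ) x) :
    Continuous fun p : TotalSpace F E => TotalSpace.mk' F' p.1 (φ p.1 p.2) := by
  refine continuous_iff_continuousAt.2 fun p => ?_
  have hproj : ContinuousAt (π F E) p := (FiberBundle.continuous_proj F E).continuousAt
  refine (FiberBundle.continuousAt_totalSpace F' _).2 ⟨hproj, ?_⟩
  have hsnd : ContinuousAt (fun q => (trivializationAt F E p.1 q).2) p :=
    ((FiberBundle.continuousAt_totalSpace F id).1 continuousAt_id).2
  refine (((hφ p.1).comp hproj).clm_apply hsnd).congr ?_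
  have hbase := (trivializationAt F E p.1).open_baseSet.mem_nhds
    (FiberBundle.mem_baseSet_trivializationAt F E p.1)
  have hbase' := (trivializationAt F' E' p.1).open_baseSet.mem_nhds
    (FiberBundle.mem_baseSet_trivializationAt F' E' p.1)
  filter_upwards [hproj hbase, hproj hbase'] with q hq hq'
  exact coordMap_apply_snd _ _ φ hq hq' q.2

theorem continuous_symm_of_continuous [FiniteDimensional 𝕜 F'] {φ : ∀ x, E x ≃ₗ[𝕜] E' x}
    (hφ : Continuous fun p : TotalSpace F E => TotalSpace.mk' F' p.1 (φ p.1 p.2)) :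
    Continuous fun p : TotalSpace F' E' => TotalSpace.mk' F p.1 ((φ p.1).symm p.2) := by
  refine continuous_of_continuousAt_coordMap (φ := fun x => ((φ x).symm : E' x →ₗ[𝕜] E x))
    fun x => ?_
  set e := trivializationAt F E x
  set e' := trivializationAt F' E' x
  have hx : x ∈ e.baseSet := FiberBundle.mem_baseSet_trivializationAt F E x
  have hx' : x ∈ e'.baseSet := FiberBundle.mem_baseSet_trivializationAt F' E' x
  have := FiniteDimensional.complete 𝕜 F
  have inverse_continuousAt : ContinuousAt ContinuousLinearMap.inverse
      (coordMap 𝕜 e e' (fun x => (φ x : E x →ₗ[𝕜] E' x)) x) := by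
    rw [coordMap_eq_coe_linearEquiv e e' φ hx hx']
    exact (contDiffAt_map_inverse (n := 0) _).continuousAt
  refine (inverse_continuousAt.comp (continuousAt_coordMap e e' hφ hx hx')).congr ?_
  filter_upwards [e.open_baseSet.mem_nhds hx, e'.open_baseSet.mem_nhds hx'] with y hy hy'
  exact (coordMap_symm e e' φ hy hy').symm

end Coordinates

section LineBundle

variable {𝕜 X F : Type*} [NontriviallyNormedField 𝕜] [CompleteSpace 𝕜] [TopologicalSpace X]
  [NormedAddCommGroup F] [NormedSpace 𝕜 F] [FiniteDimensional 𝕜 F]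
  {L L' V : X → Type*} [∀ x, AddCommGroup (L x)] [∀ x, Module 𝕜 (L x)]
  [∀ x, AddCommGroup (L' x)] [∀ x, Module 𝕜 (L' x)]
  [∀ x, AddCommGroup (V x)] [∀ x, Module 𝕜 (V x)]
  [TopologicalSpace (TotalSpace 𝕜 L)] [TopologicalSpace (TotalSpace 𝕜 L')]
  [TopologicalSpace (TotalSpace F V)]

theorem coordMap_detCancel (e : Trivialization 𝕜 (π 𝕜 L)) (e' : Trivialization 𝕜 (π 𝕜 L'))
    (f : Trivialization F (π F V)) [e.IsLinear 𝕜] [e'.IsLinear 𝕜] [f.IsLinear 𝕜]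
    (φ : ∀ x, (L x × V x) ≃ₗ[𝕜] (L' x × V x)) (s : ∀ x, L' x ≃ₗ[𝕜] L x) {x : X}
    (hx : x ∈ e.baseSet) (hx' : x ∈ e'.baseSet) (hxV : x ∈ f.baseSet) :
    coordMap 𝕜 e e' (fun x => detCancel (φ x) (s x)) x =
      (coordMap 𝕜 (e.prod f) (e'.prod f) (fun x => φ x) x).det • ContinuousLinearMap.id 𝕜 𝕜 := by
  rw [coordMap_eq_coe_linearEquiv (e.prod f) (e'.prod f) φ ⟨hx, hxV⟩ ⟨hx', hxV⟩,
    linearEquivAt_prod e f hx hxV, linearEquivAt_prod e' f hx' hxV]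
  refine ContinuousLinearMap.ext fun c => ?_
  rw [coordMap_apply e e' _ hx hx']
  refine (apply_detCancel (φ x) (s x) (e.linearEquivAt 𝕜 x hx) (e'.linearEquivAt 𝕜 x hx')
    (f.linearEquivAt 𝕜 x hxV) (e.symm x c)).trans ?_
  rw [Trivialization.linearEquivAt_apply, e.apply_mk_symm hx]
  rfl

variable [∀ x, TopologicalSpace (L x)] [FiberBundle 𝕜 L] [VectorBundle 𝕜 𝕜 L]
  [∀ x, TopologicalSpace (L' x)] [FiberBundle 𝕜 L'] [VectorBundle 𝕜 𝕜 L']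
  [∀ x, TopologicalSpace (V x)] [FiberBundle F V] [VectorBundle 𝕜 F V]

theorem continuous_detCancel {φ : ∀ x, (L x × V x) ≃ₗ[𝕜] (L' x × V x)}
    (hφ : Continuous fun p : TotalSpace (𝕜 × F) (L ×ᵇ V) =>
      TotalSpace.mk' (𝕜 × F) (E := L' ×ᵇ V) p.1 (φ p.1 p.2))
    (s : ∀ x, L' x ≃ₗ[𝕜] L x) :
    Continuous fun p : TotalSpace 𝕜 L => TotalSpace.mk' 𝕜 p.1 (detCancel (φ p.1) (s p.1) p.2) := by
  refine continuous_of_continuousAt_coordMap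
    (φ := fun x => (detCancel (φ x) (s x) : L x →ₗ[𝕜] L' x)) fun x => ?_
  set e := trivializationAt 𝕜 L x
  set e' := trivializationAt 𝕜 L' x
  set f := trivializationAt F V x
  have hx : x ∈ e.baseSet := FiberBundle.mem_baseSet_trivializationAt 𝕜 L x
  have hx' : x ∈ e'.baseSet := FiberBundle.mem_baseSet_trivializationAt 𝕜 L' x
  have hxV : x ∈ f.baseSet := FiberBundle.mem_baseSet_trivializationAt F V x
  have hdet : ContinuousAt (fun y => (coordMap 𝕜 (e.prod f) (e'.prod f) (fun y => φ y) y).det) x :=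
    ContinuousLinearMap.continuous_det.continuousAt.comp
      (continuousAt_coordMap (e.prod f) (e'.prod f) hφ ⟨hx, hxV⟩ ⟨hx', hxV⟩)
  refine (hdet.smul (continuousAt_const (y := ContinuousLinearMap.id 𝕜 𝕜))).congr ?_
  filter_upwards [e.open_baseSet.mem_nhds hx, e'.open_baseSet.mem_nhds hx',
    f.open_baseSet.mem_nhds hxV] with y hy hy' hyV
  exact (coordMap_detCancel e e' f φ s hy hy' hyV).symm

theorem stmt17_general (φ : ∀ x, (L x × V x) ≃ₗ[𝕜] (L' x × V x))
    (hφ : Continuous fun p : TotalSpace (𝕜 × F) (L ×ᵇ V) =>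
      TotalSpace.mk' (𝕜 × F) (E := L' ×ᵇ V) p.1 (φ p.1 p.2)) :
    ∃ ψ : ∀ x, L x ≃ₗ[𝕜] L' x,
      Continuous (fun p : TotalSpace 𝕜 L => TotalSpace.mk' 𝕜 p.1 (ψ p.1 p.2)) ∧
      Continuous (fun p : TotalSpace 𝕜 L' => TotalSpace.mk' 𝕜 p.1 ((ψ p.1).symm p.2)) := by
  let s (x : X) : L' x ≃ₗ[𝕜] L x := (nonempty_fiber_linearEquiv 𝕜 𝕜 L' L x).some
  have hψ := continuous_detCancel hφ s
  exact ⟨fun x => detCancel (φ x) (s x), hψ,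
    continuous_symm_of_continuous (φ := fun x => detCancel (φ x) (s x)) hψ⟩

end LineBundle

/-- Let `𝕜` be `ℝ` or `ℂ` and let `X` be a topological space.  Let `L` and `L'` be
`𝕜`-vector bundles of rank 1 over `X` and let `V` be a `𝕜`-vector bundle of rank `n`
over `X`.  If there is a vector bundle isomorphism `L ⊕ V ≅ L' ⊕ V`, then there is a
vector bundle isomorphism `L ≅ L'`. -/
theorem stmt17 (𝕜 : Type) [RCLike 𝕜] {X : Type} [TopologicalSpace X] (n : ℕ)
    (L : X → Type) [∀ x, AddCommGroup (L x)] [∀ x, Module 𝕜 (L x)]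
    [∀ x, TopologicalSpace (L x)] [TopologicalSpace (TotalSpace 𝕜 L)]
    [FiberBundle 𝕜 L] [VectorBundle 𝕜 𝕜 L]
    (L' : X → Type) [∀ x, AddCommGroup (L' x)] [∀ x, Module 𝕜 (L' x)]
    [∀ x, TopologicalSpace (L' x)] [TopologicalSpace (TotalSpace 𝕜 L')]
    [FiberBundle 𝕜 L'] [VectorBundle 𝕜 𝕜 L']
    (V : X → Type) [∀ x, AddCommGroup (V x)] [∀ x, Module 𝕜 (V x)]
    [∀ x, TopologicalSpace (V x)] [TopologicalSpace (TotalSpace (Fin n → 𝕜) V)]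
    [FiberBundle (Fin n → 𝕜) V] [VectorBundle 𝕜 (Fin n → 𝕜) V]
    (φ : ∀ x, (L x × V x) ≃ₗ[𝕜] (L' x × V x))
    (hφ_cont : Continuous
      (fun p : TotalSpace (𝕜 × (Fin n → 𝕜)) (L ×ᵇ V) =>
        TotalSpace.mk' (𝕜 × (Fin n → 𝕜)) (E := L' ×ᵇ V) p.1 (φ p.1 p.2)))
    (hφ_cont_symm : Continuous
      (fun p : TotalSpace (𝕜 × (Fin n → 𝕜)) (L' ×ᵇ V) =>
        TotalSpace.mk' (𝕜 × (Fin n → 𝕜)) (E := L ×ᵇ V) p.1 ((φ p.1).symm p.2))) :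
    ∃ ψ : ∀ x, L x ≃ₗ[𝕜] L' x,
      Continuous (fun p : TotalSpace 𝕜 L => TotalSpace.mk' 𝕜 p.1 (ψ p.1 p.2)) ∧
      Continuous (fun p : TotalSpace 𝕜 L' => TotalSpace.mk' 𝕜 p.1 ((ψ p.1).symm p.2)) :=
  stmt17_general φ hφ_cont
end
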